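/- Let H_X and H_Z be separable Hilbert spaces with H_Z infinite-dimensional, and let d_Y ∈ ℕ. Let 𝒫 be the family of distributions of triples (X, Y, Z) with values in H_X × ℝ^{d_Y} × H_Z that are jointly Gaussian with injective covariance operator. Let 𝒫₀ ⊆ 𝒫 be the subset of distributions under which X ⊥⊥ Y | Z, let 𝒬 = 𝒫 \ 𝒫₀, fix Q ∈ 𝒬, and let 𝒫₀^Q = {P ∈ 𝒫₀ : the marginal distribution of Z under P equals that under Q}. Then for every n ∈ ℕ and every measurable test ψ_n : (H_X × ℝ^{d_Y} × H_Z)^n → {0, 1}, the power is at most the size: Q^{⊗n}(ψ_n = 1) ≤ sup_{P ∈ 𝒫₀^Q} P^{⊗n}(ψ_n = 1). -/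

import Mathlib

open MeasureTheory ProbabilityTheory Filter
open scoped ENNReal NNReal RealInnerProductSpace

noncomputable section

/-- A measure on a real normed space is (jointly) Gaussian if every continuous linear
functional pushes it forward to a (possibly degenerate) Gaussian distribution on `ℝ`. -/
def IsGaussianMeasure {E : Type*} [NormedAddCommGroup E] [NormedSpace ℝ E] [MeasurableSpace E]
    (μ : Measure E) : Prop :=
  ∀ L : E →L[ℝ] ℝ, ∃ (m : ℝ) (v : ℝ≥0), μ.map L = gaussianReal m v

/-- The covariance form of a measure, evaluated at two continuous linear functionals. -/
def covForm {E : Type*} [NormedAddCommGroup E] [NormedSpace ℝ E] [MeasurableSpace E]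
    (μ : Measure E) (L₁ L₂ : E →L[ℝ] ℝ) : ℝ :=
  ∫ x, (L₁ x - ∫ y, L₁ y ∂μ) * (L₂ x - ∫ y, L₂ y ∂μ) ∂μ

/-- The covariance operator of `μ` is injective: if `Cov(L₁, L₂) = 0` for every continuous
linear functional `L₂`, then `L₁ = 0`.  On a Hilbert space this is precisely injectivity of
the covariance operator. -/
def HasInjectiveCovariance {E : Type*} [NormedAddCommGroup E] [NormedSpace ℝ E] [MeasurableSpace E]
    (μ : Measure E) : Prop :=
  ∀ L₁ : E →L[ℝ] ℝ, (∀ L₂ : E →L[ℝ] ℝ, covForm μ L₁ L₂ = 0) → L₁ = 0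

/-- `X ⫫ Y | Z` under `μ`: for all bounded measurable real-valued `f, g`,
`E(f(X) g(Y) | Z) = E(f(X) | Z) ⬝ E(g(Y) | Z)` almost surely. -/
def CondIndepGiven {Ω α β γ : Type*} [MeasurableSpace Ω] [MeasurableSpace α] [MeasurableSpace β]
    [MeasurableSpace γ] (μ : Measure Ω) (X : Ω → α) (Y : Ω → β) (Z : Ω → γ) : Prop :=
  ∀ (f : α → ℝ) (g : β → ℝ), Measurable f → Measurable g →
    (∃ C, ∀ a, |f a| ≤ C) → (∃ C, ∀ b, |g b| ≤ C) →
    μ[(fun ω => f (X ω) * g (Y ω))|MeasurableSpace.comap Z inferInstance] =ᵐ[μ]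
      fun ω => ((μ[(fun ω' => f (X ω'))|MeasurableSpace.comap Z inferInstance]) ω) *
        ((μ[(fun ω' => g (Y ω'))|MeasurableSpace.comap Z inferInstance]) ω)

/-!
Let `G` be a finite orthonormal family spanning the innovations of `Y` given `Z`, that is, the
parts of the coordinates of `Y` orthogonal to the Gaussian Hilbert space of `Z`. Removing `G` from
the observation and putting back independent standard Gaussian coefficients along the
Cameron–Martin vectors of `G` reproduces `Q`. Putting back functions `W` of `Z` instead leaves the
law of `Z` unchanged and makes `Y` a function of `Z`, so that `X ⫫ Y | Z`; the law stays Gaussian,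
and its covariance stays injective when the `W k` are linearly independent modulo `G` and the
centred continuous functionals. Such `W` exist because `Z` has infinite-dimensional range, and this
survives replacing `W k` by `∑ j < N, a k j • ζ j + c • W k`, with orthonormal functionals `ζ j`
of `Z` and `c ≠ 0`.

For random Gaussian `a k j` of variance `1 / N` and `c = 1 / N`, conditionally on the sample, the
coefficients `∑ j < N, a k j * ζ j (Z i)` are jointly Gaussian, with a covariance matrix that tends
to the identity by the law of large numbers. So `Q^{⊗n}` is, on every measurable set, a limit of
mixtures of products of null laws, and no test has power exceeding its size.
-/

open scoped Topology Matrix Kronecker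

section Density

variable {V : Type*} [NormedAddCommGroup V] [InnerProductSpace ℝ V]

/-- The Lebesgue density of the standard Gaussian measure on a finite-dimensional inner product
space. -/
def stdGaussianDensity (x : V) : ℝ :=
  ((2 * Real.pi) ^ ((Module.finrank ℝ V : ℝ) / 2))⁻¹ * Real.exp (-(1 / 2) * ‖x‖ ^ 2)

theorem stdGaussianDensity_nonneg (x : V) : 0 ≤ stdGaussianDensity x := by
  unfold stdGaussianDensity
  positivity

theorem continuous_stdGaussianDensity : Continuous (stdGaussianDensity (V := V)) := by
  unfold stdGaussianDensity
  fun_prop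

theorem stdGaussianDensity_symm_sub_le {T : V ≃L[ℝ] V} {s : V} (hT : ‖(T : V →L[ℝ] V)‖ ≤ 2)
    (hs : ‖s‖ ≤ 1) (y : V) :
    stdGaussianDensity (T.symm (y - s)) ≤
      ((2 * Real.pi) ^ ((Module.finrank ℝ V : ℝ) / 2))⁻¹ * Real.exp (1 / 8) *
        Real.exp (-(1 / 16) * ‖y‖ ^ 2) := by
  set a := T.symm (y - s)
  have hy : ‖y‖ ≤ 2 * ‖a‖ + 1 := calc
    ‖y‖ = ‖(T : V →L[ℝ] V) a + s‖ := by simp [a]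
    _ ≤ 2 * ‖a‖ + 1 :=
      norm_add_le_of_le ((T : V →L[ℝ] V).le_of_opNorm_le hT a) hs
  rw [stdGaussianDensity, mul_assoc, ← Real.exp_add]
  gcongr
  nlinarith [sq_nonneg (2 * ‖a‖ - 1), norm_nonneg y, norm_nonneg a]

theorem eventually_exists_equiv_of_tendsto_id [CompleteSpace V] {κ : Type*} {l : Filter κ}
    {T : κ → V →L[ℝ] V} (hT : Tendsto T l (𝓝 (.id ℝ V))) :
    ∀ᶠ k in l, ∃ e : V ≃L[ℝ] V, (e : V →L[ℝ] V) = T k :=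
  hT (ContinuousLinearEquiv.refl ℝ V).nhds

variable [FiniteDimensional ℝ V] [MeasurableSpace V] [BorelSpace V]

theorem integrable_exp_neg_mul_sq_norm {b : ℝ} (hb : 0 < b) :
    Integrable fun x : V => Real.exp (-b * ‖x‖ ^ 2) := by
  have hcexp := GaussianFourier.integrable_cexp_neg_mul_sq_norm_add (V := V) (b := (b : ℂ))
    (by simpa using hb) 0 0
  refine hcexp.re.congr (ae_of_all _ fun x => ?_)
  have hreal : -(b : ℂ) * (‖x‖ : ℂ) ^ 2 + 0 * (inner ℝ (0 : V) x : ℂ) =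
      ((-b * ‖x‖ ^ 2 : ℝ) : ℂ) := by
    push_cast
    ring
  simp only [hreal]
  exact Complex.exp_ofReal_re _

theorem integral_stdGaussianDensity_smul_cexp_inner (t : V) :
    ∫ x : V, stdGaussianDensity x • Complex.exp (inner ℝ x t * Complex.I) =
      Complex.exp (-(‖t‖ ^ 2) / 2) := by
  have hintegrand : ∀ x : V, stdGaussianDensity x • Complex.exp (inner ℝ x t * Complex.I) =
      (((2 * Real.pi) ^ ((Module.finrank ℝ V : ℝ) / 2))⁻¹ : ℝ) *
        Complex.exp (-((1 / 2 : ℝ) : ℂ) * (‖x‖ : ℂ) ^ 2 + Complex.I * (inner ℝ t x : ℂ)) := by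
    intro x
    rw [Complex.exp_add, stdGaussianDensity, Complex.real_smul, real_inner_comm]
    push_cast
    rw [mul_comm Complex.I, mul_assoc]
  have hconst : ((Real.pi : ℂ) / ((1 / 2 : ℝ) : ℂ)) ^ ((Module.finrank ℝ V : ℂ) / 2) =
      (((2 * Real.pi) ^ ((Module.finrank ℝ V : ℝ) / 2) : ℝ) : ℂ) := by
    rw [Complex.ofReal_cpow (by positivity)]
    push_cast
    congr 1
    ring
  simp_rw [hintegrand]
  rw [integral_const_mul, GaussianFourier.integral_cexp_neg_mul_sq_norm_add (by norm_num), hconst,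
    ← mul_assoc, ← Complex.ofReal_mul, inv_mul_cancel₀ (by positivity), Complex.ofReal_one, one_mul,
    Complex.I_sq]
  congr 1
  push_cast
  ring

theorem stdGaussian_eq_withDensity :
    stdGaussian V = volume.withDensity fun x => ENNReal.ofReal (stdGaussianDensity x) := by
  have hint : Integrable (stdGaussianDensity (V := V)) :=
    (integrable_exp_neg_mul_sq_norm (by norm_num)).const_mul _
  have := isFiniteMeasure_withDensity_ofReal hint.2
  refine Measure.ext_of_charFun (funext fun t => ?_)
  rw [charFun_stdGaussian, charFun_apply, integral_withDensity_eq_integral_toReal_smul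
    continuous_stdGaussianDensity.measurable.ennreal_ofReal (by simp)]
  simp_rw [ENNReal.toReal_ofReal (stdGaussianDensity_nonneg _)]
  exact (integral_stdGaussianDensity_smul_cexp_inner t).symm

theorem integral_stdGaussian (f : V → ℝ) :
    ∫ x, f x ∂stdGaussian V = ∫ x, stdGaussianDensity x * f x := by
  rw [stdGaussian_eq_withDensity, integral_withDensity_eq_integral_toReal_smul
    continuous_stdGaussianDensity.measurable.ennreal_ofReal (by simp)]
  simp_rw [ENNReal.toReal_ofReal (stdGaussianDensity_nonneg _), smul_eq_mul]

theorem integral_comp_affine_stdGaussian (f : V → ℝ) (T : V ≃L[ℝ] V) (s : V) :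
    ∫ x, f (T x + s) ∂stdGaussian V =
      |(T : V →L[ℝ] V).det|⁻¹ * ∫ y, stdGaussianDensity (T.symm (y - s)) * f y := by
  have hsurj : Set.range (fun x => T x + s) = Set.univ :=
    ((Equiv.addRight s).surjective.comp T.surjective).range_eq
  have hchange := integral_image_eq_integral_abs_det_fderiv_smul volume MeasurableSet.univ
    (fun x _ => ((T : V →L[ℝ] V).hasFDerivAt.add_const s).hasFDerivWithinAt)
    ((add_left_injective s).comp T.injective).injOn
    (fun y => stdGaussianDensity (T.symm (y - s)) * f y)
  have hdet : (T : V →L[ℝ] V).det ≠ 0 := T.toLinearEquiv.isUnit_det'.ne_zero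
  simp only [Set.image_univ, ContinuousLinearEquiv.coe_coe, hsurj,
    Measure.restrict_univ, add_sub_cancel_right, ContinuousLinearEquiv.symm_apply_apply,
    smul_eq_mul, integral_const_mul] at hchange
  rw [hchange, inv_mul_cancel_left₀ (abs_ne_zero.2 hdet), integral_stdGaussian]

section Limit

variable {κ : Type*} {l : Filter κ} {T : κ → V →L[ℝ] V} {s : κ → V} {f : V → ℝ} {C : ℝ}

theorem tendsto_integral_stdGaussianDensity_inverse [l.IsCountablyGenerated]
    (hT : Tendsto T l (𝓝 (.id ℝ V))) (hs : Tendsto s l (𝓝 0)) (hf : Measurable f)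
    (hC : ∀ x, ‖f x‖ ≤ C) :
    Tendsto (fun k => ∫ y, stdGaussianDensity ((T k).inverse (y - s k)) * f y) l
      (𝓝 (∫ y, stdGaussianDensity y * f y)) := by
  refine tendsto_integral_filter_of_dominated_convergence (fun y => ((2 * Real.pi) ^
    ((Module.finrank ℝ V : ℝ) / 2))⁻¹ * Real.exp (1 / 8) * Real.exp (-(1 / 16) * ‖y‖ ^ 2) * C)
    ?_ ?_ (((integrable_exp_neg_mul_sq_norm (by norm_num)).const_mul _).mul_const _) ?_
  · refine Eventually.of_forall fun k => (Measurable.mul ?_ hf).aestronglyMeasurable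
    exact continuous_stdGaussianDensity.measurable.comp (by fun_prop)
  · have hT_le : ∀ᶠ k in l, ‖T k‖ ≤ 2 :=
      (hT.norm.eventually_lt_const
        (ContinuousLinearMap.norm_id_le.trans_lt one_lt_two)).mono fun _ => le_of_lt
    have hs_le : ∀ᶠ k in l, ‖s k‖ ≤ 1 :=
      (hs.norm.eventually_lt_const (by simp)).mono fun _ => le_of_lt
    filter_upwards [eventually_exists_equiv_of_tendsto_id hT, hT_le, hs_le]
      with k ⟨e, he⟩ hTk hsk
    refine ae_of_all _ fun y => ?_
    rw [← he] at hTk ⊢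
    rw [norm_mul, Real.norm_of_nonneg (stdGaussianDensity_nonneg _),
      ContinuousLinearMap.inverse_equiv]
    exact mul_le_mul (stdGaussianDensity_symm_sub_le hTk hsk y) (hC y) (norm_nonneg _)
      (by positivity)
  · have hinv : Tendsto (fun k => (T k).inverse) l (𝓝 (.id ℝ V)) := by
      have hcont :=
        (contDiffAt_map_inverse (n := 0) (ContinuousLinearEquiv.refl ℝ V)).continuousAt.tendsto
      rw [ContinuousLinearEquiv.coe_refl, ContinuousLinearMap.inverse_id] at hcont
      exact hcont.comp hT
    refine ae_of_all _ fun y => ((continuous_stdGaussianDensity.tendsto y).comp ?_).mul_const _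
    have happly := (isBoundedBilinearMap_apply (𝕜 := ℝ) (E := V) (F := V)).continuous.tendsto
      (.id ℝ V, y - 0) |>.comp (hinv.prodMk_nhds (hs.const_sub y))
    simpa only [sub_zero] using! happly

theorem tendsto_integral_comp_affine_stdGaussian [l.IsCountablyGenerated]
    (hT : Tendsto T l (𝓝 (.id ℝ V))) (hs : Tendsto s l (𝓝 0)) (hf : Measurable f)
    (hC : ∀ x, ‖f x‖ ≤ C) :
    Tendsto (fun k => ∫ x, f (T k x + s k) ∂stdGaussian V) l (𝓝 (∫ x, f x ∂stdGaussian V)) := by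
  have hdet : Tendsto (fun k => |(T k).det|⁻¹) l (𝓝 1) := by
    simpa [ContinuousLinearMap.det] using
      ((ContinuousLinearMap.continuous_det.tendsto _).comp hT).abs.inv₀
        (by simp [ContinuousLinearMap.det])
  have hprod := hdet.mul (tendsto_integral_stdGaussianDensity_inverse hT hs hf hC)
  rw [one_mul, ← integral_stdGaussian] at hprod
  refine hprod.congr' ?_
  filter_upwards [eventually_exists_equiv_of_tendsto_id hT] with k ⟨e, he⟩
  rw [← he, ContinuousLinearMap.inverse_equiv]
  exact (integral_comp_affine_stdGaussian f e (s k)).symm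

end Limit

end Density

section Matrix

open scoped MatrixOrder Matrix.Norms.L2Operator

variable {ι : Type*} [Fintype ι]

/-- The law on `ι → ℝ` of a family of independent standard normal variables. -/
abbrev stdNormalPi (ι : Type*) [Fintype ι] : Measure (ι → ℝ) :=
  Measure.pi fun _ => gaussianReal 0 1

theorem integral_stdNormalPi (f : EuclideanSpace ℝ ι → ℝ) (hf : Measurable f) :
    ∫ g, f (WithLp.toLp 2 g) ∂stdNormalPi ι = ∫ x, f x ∂stdGaussian (EuclideanSpace ℝ ι) := by
  rw [← map_pi_eq_stdGaussian, integral_map (by fun_prop) hf.aestronglyMeasurable]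

theorem charFun_map_mulVec_add_stdNormalPi {κ : Type*} [Fintype κ] (B : Matrix ι κ ℝ) (s : ι → ℝ)
    (t : EuclideanSpace ℝ ι) :
    charFun ((stdNormalPi κ).map fun g => WithLp.toLp 2 (B *ᵥ g + s)) t =
      Complex.exp (inner ℝ t (WithLp.toLp 2 s) * Complex.I - (t ⬝ᵥ (B * Bᵀ) *ᵥ t : ℝ) / 2) := by
  have hinner : ∀ g : κ → ℝ, inner ℝ (WithLp.toLp 2 (B *ᵥ g + s)) t =
      inner ℝ (WithLp.toLp 2 g) (WithLp.toLp 2 (Bᵀ *ᵥ t)) + inner ℝ t (WithLp.toLp 2 s) := by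
    intro g
    simp only [EuclideanSpace.inner_eq_star_dotProduct, star_trivial, Matrix.mulVec_transpose]
    rw [dotProduct_add, Matrix.dotProduct_mulVec, dotProduct_comm s]
  have hquad : ‖(WithLp.toLp 2 (Bᵀ *ᵥ t) : EuclideanSpace ℝ κ)‖ ^ 2 = t ⬝ᵥ (B * Bᵀ) *ᵥ t := by
    rw [EuclideanSpace.real_norm_sq_eq, ← Matrix.mulVec_mulVec, Matrix.dotProduct_mulVec,
      ← Matrix.mulVec_transpose]
    simp only [dotProduct, sq]
  have hstd : ∫ g, Complex.exp ((inner ℝ (WithLp.toLp 2 g) (WithLp.toLp 2 (Bᵀ *ᵥ t)) : ℝ) *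
      Complex.I) ∂stdNormalPi κ = Complex.exp (-((t ⬝ᵥ (B * Bᵀ) *ᵥ t : ℝ) : ℂ) / 2) := by
    rw [← hquad, Complex.ofReal_pow, ← charFun_stdGaussian, ← map_pi_eq_stdGaussian,
      charFun_apply, integral_map (by fun_prop) (by fun_prop)]
  rw [charFun_apply, integral_map (by fun_prop) (by fun_prop)]
  simp_rw [hinner, Complex.ofReal_add, add_mul, Complex.exp_add]
  rw [integral_mul_const, hstd, ← Complex.exp_add]
  congr 1
  ring

variable [DecidableEq ι]

theorem map_mulVec_add_stdNormalPi {κ : Type*} [Fintype κ] (B : Matrix ι κ ℝ) (s : ι → ℝ) :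
    (stdNormalPi κ).map (fun g => WithLp.toLp 2 (B *ᵥ g + s)) =
      multivariateGaussian (WithLp.toLp 2 s) (B * Bᵀ) := by
  have := Measure.isProbabilityMeasure_map (μ := stdNormalPi κ)
    (f := fun g => WithLp.toLp 2 (B *ᵥ g + s)) (by fun_prop)
  have hpos : (B * Bᵀ).PosSemidef := Matrix.posSemidef_self_mul_conjTranspose B
  refine Measure.ext_of_charFun (funext fun t => ?_)
  rw [charFun_map_mulVec_add_stdNormalPi, charFun_multivariateGaussian hpos]

theorem integral_stdNormalPi_mulVec_add {κ : Type*} [Fintype κ] (B : Matrix ι κ ℝ) (s : ι → ℝ)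
    {f : EuclideanSpace ℝ ι → ℝ} (hf : Measurable f) :
    ∫ g, f (WithLp.toLp 2 (B *ᵥ g + s)) ∂stdNormalPi κ =
      ∫ x, f (Matrix.toEuclideanCLM (𝕜 := ℝ) (CFC.sqrt (B * Bᵀ)) x + WithLp.toLp 2 s)
        ∂stdGaussian (EuclideanSpace ℝ ι) := by
  rw [← integral_map (φ := fun g => WithLp.toLp 2 (B *ᵥ g + s)) (by fun_prop)
    hf.aestronglyMeasurable, map_mulVec_add_stdNormalPi, multivariateGaussian,
    integral_map (by fun_prop) hf.aestronglyMeasurable]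
  simp_rw [add_comm (WithLp.toLp 2 s)]

theorem tendsto_integral_stdNormalPi_mulVec_add {α : Type*} {l : Filter α} [l.IsCountablyGenerated]
    {κ : α → Type*} [∀ a, Fintype (κ a)] {B : ∀ a, Matrix ι (κ a) ℝ}
    (hB : Tendsto (fun a => B a * (B a)ᵀ) l (𝓝 1)) {s : α → ι → ℝ} (hs : Tendsto s l (𝓝 0))
    {f : (ι → ℝ) → ℝ} (hf : Measurable f) {C : ℝ} (hC : ∀ x, ‖f x‖ ≤ C) :
    Tendsto (fun a => ∫ g, f (B a *ᵥ g + s a) ∂stdNormalPi (κ a)) l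
      (𝓝 (∫ g, f g ∂stdNormalPi ι)) := by
  have hf' : Measurable fun x : EuclideanSpace ℝ ι => f x.ofLp := hf.comp (by fun_prop)
  have hsqrt : Tendsto (fun a => CFC.sqrt (B a * (B a)ᵀ)) l (𝓝 1) := by
    have hcont := CFC.continuousOn_sqrt (A := Matrix ι ι ℝ) 1
      (zero_le_one : (0 : Matrix ι ι ℝ) ≤ 1)
    rw [ContinuousWithinAt, CFC.sqrt_one] at hcont
    exact hcont.comp (tendsto_nhdsWithin_iff.2 ⟨hB, Eventually.of_forall fun a =>
      (Matrix.posSemidef_self_mul_conjTranspose (B a)).nonneg⟩)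
  have hT : Tendsto (fun a => Matrix.toEuclideanCLM (𝕜 := ℝ) (CFC.sqrt (B a * (B a)ᵀ))) l
      (𝓝 (ContinuousLinearMap.id ℝ (EuclideanSpace ℝ ι))) := by
    have hcont : Continuous (Matrix.toEuclideanCLM (𝕜 := ℝ) (n := ι)) :=
      LinearMap.continuous_of_finiteDimensional
        (Matrix.toEuclideanCLM (𝕜 := ℝ) (n := ι)).toAlgEquiv.toLinearMap
    simpa only [map_one] using! (hcont.tendsto 1).comp hsqrt
  have hs' : Tendsto (fun a => (WithLp.toLp 2 (s a) : EuclideanSpace ℝ ι)) l (𝓝 0) :=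
    ((PiLp.continuous_toLp 2 fun _ : ι => ℝ).tendsto 0).comp hs
  rw [integral_stdNormalPi _ hf']
  simp_rw [integral_stdNormalPi_mulVec_add (B _) (s _) hf']
  exact tendsto_integral_comp_affine_stdGaussian hT hs' hf' fun x => hC _

end Matrix

section L2

variable {Ω : Type*} [MeasurableSpace Ω] {μ : Measure Ω}

theorem inner_L2_eq_integral_mul (f g : Lp ℝ 2 μ) : ⟪f, g⟫ = ∫ x, f x * g x ∂μ := by
  simp only [L2.inner_def, RCLike.inner_apply, conj_trivial, mul_comm]

theorem coeFn_sum_smul_L2 {ι : Type*} [Fintype ι] (c : ι → ℝ) (f : ι → Lp ℝ 2 μ) :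
    ⇑(∑ i, c i • f i) =ᵐ[μ] fun x => ∑ i, c i * f i x := by
  filter_upwards [Lp.coeFn_fun_finsetSum Finset.univ fun i => c i • f i,
    ae_all_iff.2 fun i => Lp.coeFn_smul (c i) (f i)] with x hsum hsmul
  simp only [hsum, hsmul, Pi.smul_apply, smul_eq_mul]

theorem continuous_integral_L2 [IsFiniteMeasure μ] :
    Continuous fun f : Lp ℝ 2 μ => ∫ x, f x ∂μ := by
  have h (f : Lp ℝ 2 μ) :
      ∫ x, f x ∂μ = ⟪indicatorConstLp 2 MeasurableSet.univ (measure_ne_top μ _) (1 : ℝ), f⟫ := by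
    rw [L2.inner_indicatorConstLp_one, setIntegral_univ]
  simp_rw [h]
  fun_prop

variable [IsProbabilityMeasure μ]

theorem variance_L2_eq (f : Lp ℝ 2 μ) : Var[f; μ] = ‖f‖ ^ 2 - (∫ x, f x ∂μ) ^ 2 := by
  rw [variance_eq_sub (Lp.memLp f), ← real_inner_self_eq_norm_sq, inner_L2_eq_integral_mul]
  simp only [Pi.pow_apply, sq]

theorem covariance_L2_eq_inner (f : Lp ℝ 2 μ) {g : Lp ℝ 2 μ} (hg : ∫ x, g x ∂μ = 0) :
    cov[f, g; μ] = ⟪f, g⟫ := by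
  rw [covariance_eq_sub (Lp.memLp f) (Lp.memLp g), hg, mul_zero, sub_zero,
    inner_L2_eq_integral_mul]
  rfl

theorem continuous_charFun_map_L2 (t : ℝ) :
    Continuous fun f : Lp ℝ 2 μ => charFun (μ.map f) t := by
  refine continuous_iff_seqContinuous.2 fun u f hu => ?_
  have hlaw : TendstoInDistribution (fun n => (u n : Ω → ℝ)) atTop f (fun _ => μ) μ :=
    (tendstoInMeasure_of_tendsto_Lp hu).tendstoInDistribution
      fun n => (Lp.aestronglyMeasurable (u n)).aemeasurable
  exact ProbabilityMeasure.tendsto_iff_tendsto_charFun.1 hlaw.tendsto t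

theorem isClosed_setOf_hasGaussianLaw_L2 : IsClosed {f : Lp ℝ 2 μ | HasGaussianLaw f μ} := by
  have hset : {f : Lp ℝ 2 μ | HasGaussianLaw f μ} = {f : Lp ℝ 2 μ | ∀ t, charFun (μ.map f) t =
      Complex.exp ((t * ∫ x, f x ∂μ : ℝ) * Complex.I -
        (t ^ 2 * (‖f‖ ^ 2 - (∫ x, f x ∂μ) ^ 2) : ℝ) / 2)} := by
    ext f
    have hinner (t : ℝ) : (fun x => ⟪t, f x⟫) = fun x => t * f x := by
      ext x
      simp [mul_comm]
    simp only [Set.mem_ofPred_eq, hinner, integral_const_mul, variance_const_mul, variance_L2_eq,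
      hasGaussianLaw_iff_charFun_map_eq (Lp.aestronglyMeasurable f).aemeasurable]
  rw [hset, Set.ofPred_forall]
  refine isClosed_iInter fun t => isClosed_eq (continuous_charFun_map_L2 t) ?_
  have := continuous_integral_L2 (μ := μ)
  fun_prop

end L2

section GaussianSpace

variable {E : Type*} [NormedAddCommGroup E] [NormedSpace ℝ E]
  [MeasurableSpace E] [BorelSpace E]
  {F : Type*} [NormedAddCommGroup F] [NormedSpace ℝ F]

/-- The centred functional `x ↦ L x - ∫ y, L y ∂Q`, as an element of `L²(Q)`, depending
continuously and linearly on the functional `L`. -/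
def centeredDual (Q : Measure E) [IsFiniteMeasure Q] : StrongDual ℝ E →L[ℝ] Lp ℝ 2 Q :=
  StrongDual.toLp Q 2 - Lp.constL 2 Q ℝ ∘L ContinuousLinearMap.apply ℝ ℝ (∫ x, x ∂Q)

/-- The Gaussian Hilbert space generated by the random element `p`: the `L²(Q)`-closure of the
centred continuous linear functionals of `p`. -/
def gaussianSpace (Q : Measure E) [IsFiniteMeasure Q] (p : E →L[ℝ] F) :
    Submodule ℝ (Lp ℝ 2 Q) :=
  (LinearMap.range
    (centeredDual Q ∘L (ContinuousLinearMap.compL ℝ E F ℝ).flip p).toLinearMap).topologicalClosure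

variable {Q : Measure E} {p : E →L[ℝ] F}

theorem centeredDual_comp_mem_gaussianSpace [IsFiniteMeasure Q] (L : StrongDual ℝ F) :
    centeredDual Q (L ∘L p) ∈ gaussianSpace Q p :=
  Submodule.le_topologicalClosure _ ⟨L, rfl⟩

theorem gaussianSpace_subset_of_isClosed [IsFiniteMeasure Q] {s : Set (Lp ℝ 2 Q)}
    (hs : IsClosed s) (h : ∀ L : StrongDual ℝ F, centeredDual Q (L ∘L p) ∈ s) :
    (gaussianSpace Q p : Set (Lp ℝ 2 Q)) ⊆ s :=
  closure_minimal (Set.range_subset_iff.2 h) hs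

theorem isClosed_gaussianSpace [IsFiniteMeasure Q] :
    IsClosed (gaussianSpace Q p : Set (Lp ℝ 2 Q)) :=
  Submodule.isClosed_topologicalClosure _

theorem centeredDual_mem_gaussianSpace_id [IsFiniteMeasure Q] (L : StrongDual ℝ E) :
    centeredDual Q L ∈ gaussianSpace Q (.id ℝ E) :=
  centeredDual_comp_mem_gaussianSpace L

theorem gaussianSpace_le_gaussianSpace_id [IsFiniteMeasure Q] :
    gaussianSpace Q p ≤ gaussianSpace Q (.id ℝ E) :=
  gaussianSpace_subset_of_isClosed isClosed_gaussianSpace fun _ =>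
    centeredDual_mem_gaussianSpace_id _

variable [CompleteSpace E] [SecondCountableTopology E] [IsGaussian Q]

theorem coeFn_centeredDual (L : StrongDual ℝ E) :
    centeredDual Q L =ᵐ[Q] fun x => L x - L (∫ y, y ∂Q) := by
  have hL : MemLp L 2 Q := IsGaussian.memLp_two_id.continuousLinearMap_comp L
  have happly : centeredDual Q L = hL.toLp L - Lp.const 2 Q (L (∫ y, y ∂Q)) := by
    simp [centeredDual, StrongDual.toLp_apply IsGaussian.memLp_two_id]
  rw [happly]
  filter_upwards [Lp.coeFn_sub (hL.toLp L) (Lp.const 2 Q (L (∫ y, y ∂Q))), hL.coeFn_toLp,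
    Lp.coeFn_const 2 Q (L (∫ y, y ∂Q))] with x hsub hfun hconst
  rw [hsub, Pi.sub_apply, hfun, hconst, Function.const_apply]

theorem integral_eq_zero_of_mem_gaussianSpace {f : Lp ℝ 2 Q} (hf : f ∈ gaussianSpace Q p) :
    ∫ x, f x ∂Q = 0 := by
  refine gaussianSpace_subset_of_isClosed
    (isClosed_eq continuous_integral_L2 continuous_const) (fun L => ?_) hf
  have hL : Integrable (L ∘L p) Q := IsGaussian.integrable_dual Q _
  rw [Set.mem_ofPred_eq, integral_congr_ae (coeFn_centeredDual _),
    integral_sub hL (integrable_const _), IsGaussian.integral_dual]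
  simp

theorem hasGaussianLaw_of_mem_gaussianSpace {f : Lp ℝ 2 Q} (hf : f ∈ gaussianSpace Q p) :
    HasGaussianLaw f Q := by
  refine gaussianSpace_subset_of_isClosed isClosed_setOf_hasGaussianLaw_L2 (fun L => ?_) hf
  have hlaw : IsGaussian ((Q.map (L ∘L p)).map (· - (L ∘L p) (∫ y, y ∂Q))) := inferInstance
  rw [Measure.map_map (by fun_prop) (by fun_prop)] at hlaw
  exact HasGaussianLaw.congr ⟨hlaw⟩ (coeFn_centeredDual (L ∘L p)).symm

theorem map_eq_gaussianReal_of_mem_gaussianSpace {f : Lp ℝ 2 Q} (hf : f ∈ gaussianSpace Q p) :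
    Q.map f = gaussianReal 0 (‖f‖₊ ^ 2) := by
  rw [(hasGaussianLaw_of_mem_gaussianSpace hf).map_eq_gaussianReal, variance_L2_eq,
    integral_eq_zero_of_mem_gaussianSpace hf]
  congr 1
  ext
  simp

theorem norm_sq_centeredDual (L : StrongDual ℝ E) : ‖centeredDual Q L‖ ^ 2 = Var[L; Q] := by
  have hvar := variance_L2_eq (centeredDual Q L)
  rw [integral_eq_zero_of_mem_gaussianSpace (centeredDual_mem_gaussianSpace_id L),
    variance_congr (coeFn_centeredDual L),
    variance_sub_const L.continuous.aestronglyMeasurable] at hvar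
  simpa using hvar.symm

theorem exists_measurable_comp_of_mem_gaussianSpace [MeasurableSpace F] [BorelSpace F]
    {f : Lp ℝ 2 Q} (hf : f ∈ gaussianSpace Q p) :
    ∃ w : F → ℝ, Measurable w ∧ f =ᵐ[Q] w ∘ p := by
  have hp : Measurable p := p.continuous.measurable
  have : Fact (1 ≤ (2 : ℝ≥0∞)) := ⟨one_le_two⟩
  have hmeas : AEStronglyMeasurable[MeasurableSpace.comap p inferInstance] f Q := by
    refine gaussianSpace_subset_of_isClosed (isClosed_aestronglyMeasurable hp.comap_le)
      (fun L => ⟨fun x => L (p x) - L (p (∫ y, y ∂Q)), ?_, coeFn_centeredDual _⟩) hf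
    exact ((L.continuous.measurable.comp (comap_measurable p)).sub_const _).stronglyMeasurable
  obtain ⟨f', hf', hff'⟩ := hmeas
  obtain ⟨w, hw, rfl⟩ := hf'.measurable.exists_eq_measurable_comp
  exact ⟨w, hw, hff'⟩

end GaussianSpace

section JointlyGaussian

theorem dual_prod_pi_apply {E ι : Type*} [AddCommGroup E] [Module ℝ E] [TopologicalSpace E]
    [Fintype ι] [DecidableEq ι] (L : E × (ι → ℝ) →L[ℝ] ℝ) (x : E) (u : ι → ℝ) :
    L (x, u) = L (x, 0) + ∑ i, L (0, Pi.single i 1) * u i := by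
  have hsplit : (x, u) = (x, 0) + ∑ i, u i • ((0 : E), (Pi.single i 1 : ι → ℝ)) := by
    ext1
    · simp [Prod.fst_sum]
    · simpa [Prod.snd_sum] using pi_eq_sum_univ' u
  simp only [hsplit, map_add, map_sum, map_smul, smul_eq_mul, mul_comm]

variable {E : Type*} [NormedAddCommGroup E] [NormedSpace ℝ E] [CompleteSpace E]
  [SecondCountableTopology E] [MeasurableSpace E] [BorelSpace E] {Q : Measure E} [IsGaussian Q]

theorem hasGaussianLaw_prodMk_of_mem_gaussianSpace {ι : Type*} [Finite ι] {U : ι → Lp ℝ 2 Q}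
    (hU : ∀ i, U i ∈ gaussianSpace Q (.id ℝ E)) :
    HasGaussianLaw (fun x => (x, fun i => U i x)) Q := by
  classical
  have := Fintype.ofFinite ι
  have hmeas : Measurable fun x => (x, fun i => U i x) := measurable_id.prodMk
    (measurable_pi_lambda _ fun i => (Lp.stronglyMeasurable (U i)).measurable)
  refine ⟨isGaussian_of_map_eq_gaussianReal fun L => ?_⟩
  set c : ι → ℝ := fun i => L (0, Pi.single i 1)
  set L₁ := L ∘L .inl ℝ E (ι → ℝ)
  have hf : centeredDual Q L₁ + ∑ i, c i • U i ∈ gaussianSpace Q (.id ℝ E) :=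
    add_mem (centeredDual_mem_gaussianSpace_id _)
      (sum_mem fun i _ => Submodule.smul_mem _ _ (hU i))
  have hLf : L ∘ (fun x => (x, fun i => U i x)) =ᵐ[Q]
      (· + L₁ (∫ y, y ∂Q)) ∘ (centeredDual Q L₁ + ∑ i, c i • U i : Lp ℝ 2 Q) := by
    filter_upwards [Lp.coeFn_add (centeredDual Q L₁) (∑ i, c i • U i), coeFn_centeredDual L₁,
      coeFn_sum_smul_L2 c U] with x hadd hfst hsnd
    rw [Function.comp_apply, Function.comp_apply, dual_prod_pi_apply, hadd, Pi.add_apply, hfst,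
      hsnd]
    simp only [L₁, c, ContinuousLinearMap.comp_apply, ContinuousLinearMap.inl_apply]
    ring
  rw [Measure.map_map (by fun_prop) hmeas, Measure.map_congr hLf,
    ← Measure.map_map (by fun_prop) (Lp.stronglyMeasurable _).measurable,
    map_eq_gaussianReal_of_mem_gaussianSpace hf, gaussianReal_map_add_const]
  exact ⟨_, _, rfl⟩

theorem iIndepFun_of_orthonormal_gaussianSpace {ι : Type*} {ζ : ι → Lp ℝ 2 Q}
    (hζ : Orthonormal ℝ ζ) (hmem : ∀ i, ζ i ∈ gaussianSpace Q (.id ℝ E)) :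
    iIndepFun (fun i => (ζ i : E → ℝ)) Q := by
  rw [iIndepFun_iff_finset]
  refine fun s => HasGaussianLaw.iIndepFun_of_covariance_eq_zero
    (hasGaussianLaw_prodMk_of_mem_gaussianSpace fun i : s => hmem i).snd fun i j hij => ?_
  rw [Finset.restrict_def,
    covariance_L2_eq_inner _ (integral_eq_zero_of_mem_gaussianSpace (hmem j))]
  exact hζ.2 (Subtype.coe_injective.ne hij)

theorem map_eq_gaussianReal_of_norm_eq_one {f : Lp ℝ 2 Q} (hf : f ∈ gaussianSpace Q (.id ℝ E))
    (hnorm : ‖f‖ = 1) : Q.map f = gaussianReal 0 1 := by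
  have : ‖f‖₊ = 1 := NNReal.eq hnorm
  rw [map_eq_gaussianReal_of_mem_gaussianSpace hf, this, one_pow]

theorem map_pi_eq_stdNormalPi_of_orthonormal {ι : Type*} [Fintype ι] {ζ : ι → Lp ℝ 2 Q}
    (hζ : Orthonormal ℝ ζ) (hmem : ∀ i, ζ i ∈ gaussianSpace Q (.id ℝ E)) :
    Q.map (fun x i => ζ i x) = stdNormalPi ι := by
  rw [(iIndepFun_iff_map_fun_eq_pi_map fun i => (Lp.aestronglyMeasurable (ζ i)).aemeasurable).1
    (iIndepFun_of_orthonormal_gaussianSpace hζ hmem)]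
  simp only [map_eq_gaussianReal_of_norm_eq_one (hmem _) (hζ.1 _)]

end JointlyGaussian

theorem covariance_congr_ae {Ω : Type*} [MeasurableSpace Ω] {μ : Measure Ω} {f f' g g' : Ω → ℝ}
    (hf : f =ᵐ[μ] f') (hg : g =ᵐ[μ] g') : cov[f, g; μ] = cov[f', g'; μ] := by
  unfold covariance
  rw [integral_congr_ae hf, integral_congr_ae hg]
  refine integral_congr_ae ?_
  filter_upwards [hf, hg] with x hfx hgx
  rw [hfx, hgx]

section InnovationShift

variable {E : Type*} [NormedAddCommGroup E] [NormedSpace ℝ E] [MeasurableSpace E] [BorelSpace E]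
  {κ : Type*} [Fintype κ]

/-- The Cameron–Martin vector of `g ∈ L²(Q)`, which represents the functional
`L ↦ ⟪g, centeredDual Q L⟫`. -/
def cameronMartinVector (Q : Measure E) (g : Lp ℝ 2 Q) : E :=
  ∫ x, g x • (x - ∫ y, y ∂Q) ∂Q

/-- Subtract from `x` the amount `U k x` in the Cameron–Martin direction of each `G k`. For
orthonormal `G`, the choice `U = G` removes the innovations `G` from `x`, and `U = G - W` replaces
them by `W`. -/
def innovationShift (Q : Measure E) (G : κ → Lp ℝ 2 Q) (U : κ → E → ℝ) (x : E) : E :=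
  x - ∑ k, U k x • cameronMartinVector Q (G k)

variable {Q : Measure E} {G : κ → Lp ℝ 2 Q} {U : κ → E → ℝ}
  {F : Type*} [NormedAddCommGroup F] [NormedSpace ℝ F] {p : E →L[ℝ] F}

variable [SecondCountableTopology E]

theorem measurable_innovationShift (hU : ∀ k, Measurable (U k)) :
    Measurable (innovationShift Q G U) := by
  unfold innovationShift
  fun_prop

variable [CompleteSpace E] [IsGaussian Q]

theorem dual_cameronMartinVector (g : Lp ℝ 2 Q) (L : StrongDual ℝ E) :
    L (cameronMartinVector Q g) = ⟪g, centeredDual Q L⟫ := by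
  have hcenter : MemLp (fun x => x - ∫ y, y ∂Q) 2 Q :=
    IsGaussian.memLp_two_id.sub (memLp_const _)
  have hint : Integrable (fun x => g x • (x - ∫ y, y ∂Q)) Q :=
    memLp_one_iff_integrable.1 (hcenter.smul (Lp.memLp g))
  rw [cameronMartinVector, ← L.integral_comp_comm hint, inner_L2_eq_integral_mul]
  refine integral_congr_ae ?_
  filter_upwards [coeFn_centeredDual L] with x hx
  rw [hx, map_smul, map_sub, smul_eq_mul]

theorem map_cameronMartinVector_eq_zero {g : Lp ℝ 2 Q} (hg : g ∈ (gaussianSpace Q p)ᗮ) :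
    p (cameronMartinVector Q g) = 0 := by
  refine SeparatingDual.eq_zero_of_forall_dual_eq_zero (R := ℝ) fun L => ?_
  rw [← ContinuousLinearMap.comp_apply, dual_cameronMartinVector]
  exact Submodule.inner_left_of_mem_orthogonal (centeredDual_comp_mem_gaussianSpace L) hg

theorem map_innovationShift (hG : ∀ k, G k ∈ (gaussianSpace Q p)ᗮ) (x : E) :
    p (innovationShift Q G U x) = p x := by
  simp [innovationShift, map_cameronMartinVector_eq_zero (hG _)]

variable {V : κ → Lp ℝ 2 Q}

theorem dual_innovationShift_ae_eq (hUV : ∀ k, U k =ᵐ[Q] V k) (L : StrongDual ℝ E) :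
    L ∘ innovationShift Q G U =ᵐ[Q] fun x =>
      (centeredDual Q L - ∑ k, ⟪G k, centeredDual Q L⟫ • V k : Lp ℝ 2 Q) x + L (∫ y, y ∂Q) := by
  filter_upwards [ae_all_iff.2 hUV, coeFn_centeredDual L,
    Lp.coeFn_sub (centeredDual Q L) (∑ k, ⟪G k, centeredDual Q L⟫ • V k),
    coeFn_sum_smul_L2 (fun k => ⟪G k, centeredDual Q L⟫) V] with x hU hL hsub hsum
  rw [hsub, Pi.sub_apply, hL, hsum]
  simp only [Function.comp_apply, innovationShift, map_sub, map_sum, map_smul, smul_eq_mul,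
    dual_cameronMartinVector, hU, mul_comm]
  ring

theorem hasGaussianLaw_innovationShift_prodMk (hV : ∀ k, V k ∈ gaussianSpace Q (.id ℝ E))
    (hUV : ∀ k, U k =ᵐ[Q] V k) :
    HasGaussianLaw (fun x => (innovationShift Q G U x, fun k => V k x)) Q := by
  let T : E × (κ → ℝ) →L[ℝ] E := .fst ℝ E _ -
    ∑ k, (ContinuousLinearMap.proj k ∘L .snd ℝ E _).smulRight (cameronMartinVector Q (G k))
  refine ((hasGaussianLaw_prodMk_of_mem_gaussianSpace hV).map_fun (T.prod (.snd ℝ E _))).congr ?_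
  filter_upwards [ae_all_iff.2 hUV] with x hU
  simp [T, innovationShift, hU]

theorem variance_map_innovationShift (hV : ∀ k, V k ∈ gaussianSpace Q (.id ℝ E))
    (hU : ∀ k, Measurable (U k)) (hUV : ∀ k, U k =ᵐ[Q] V k) (L : StrongDual ℝ E) :
    Var[L; Q.map (innovationShift Q G U)] =
      ‖centeredDual Q L - ∑ k, ⟪G k, centeredDual Q L⟫ • V k‖ ^ 2 := by
  have hmem : centeredDual Q L - ∑ k, ⟪G k, centeredDual Q L⟫ • V k ∈ gaussianSpace Q (.id ℝ E) :=
    sub_mem (centeredDual_mem_gaussianSpace_id L)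
      (sum_mem fun k _ => Submodule.smul_mem _ _ (hV k))
  rw [variance_map (by fun_prop) (measurable_innovationShift hU).aemeasurable,
    variance_congr (dual_innovationShift_ae_eq hUV L),
    variance_add_const (Lp.aestronglyMeasurable _), variance_L2_eq,
    integral_eq_zero_of_mem_gaussianSpace hmem]
  ring

theorem indepFun_innovationShift_self (hG : Orthonormal ℝ G)
    (hmem : ∀ k, G k ∈ gaussianSpace Q (.id ℝ E)) :
    IndepFun (innovationShift Q G fun k => G k) (fun x k => G k x) Q := by
  refine (hasGaussianLaw_innovationShift_prodMk hmem
    fun _ => .rfl).indepFun_of_covariance_strongDual fun L₁ L₂ => ?_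
  classical
  set R : Lp ℝ 2 Q := centeredDual Q L₁ - ∑ k, ⟪G k, centeredDual Q L₁⟫ • G k
  set c : κ → ℝ := fun k => L₂ fun j => if k = j then 1 else 0
  have hR (k : κ) : ⟪R, G k⟫ = 0 := by
    rw [inner_sub_left, hG.inner_left_fintype, real_inner_comm, conj_trivial, sub_self]
  have hL₂ : L₂ ∘ (fun x k => G k x) =ᵐ[Q] (∑ k, c k • G k : Lp ℝ 2 Q) := by
    filter_upwards [coeFn_sum_smul_L2 c G] with x hsum
    rw [hsum, Function.comp_apply, ← ContinuousLinearMap.coe_coe, LinearMap.pi_apply_eq_sum_univ]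
    simp only [c, smul_eq_mul, mul_comm, ContinuousLinearMap.coe_coe]
  have hmean : ∫ x, (∑ k, c k • G k : Lp ℝ 2 Q) x ∂Q = 0 :=
    integral_eq_zero_of_mem_gaussianSpace
      (sum_mem fun k _ => Submodule.smul_mem _ (c k) (hmem k))
  rw [covariance_congr_ae (dual_innovationShift_ae_eq (fun _ => .rfl) L₁) hL₂,
    covariance_add_const_left ((Lp.memLp R).integrable one_le_two),
    covariance_L2_eq_inner _ hmean, inner_sum]
  simp only [inner_smul_right, hR, mul_zero, Finset.sum_const_zero]

theorem map_prod_stdNormalPi_eq_self (hG : Orthonormal ℝ G)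
    (hmem : ∀ k, G k ∈ gaussianSpace Q (.id ℝ E)) :
    ((Q.map (innovationShift Q G fun k => G k)).prod (stdNormalPi κ)).map
      (fun y => y.1 + ∑ k, y.2 k • cameronMartinVector Q (G k)) = Q := by
  have hG' (k) : Measurable (G k) := (Lp.stronglyMeasurable (G k)).measurable
  have hshift := measurable_innovationShift (Q := Q) (G := G) hG'
  have hpi : Measurable fun x k => G k x := measurable_pi_lambda _ hG'
  rw [← map_pi_eq_stdNormalPi_of_orthonormal hG hmem,
    ← (indepFun_iff_map_prod_eq_prod_map_map hshift.aemeasurable hpi.aemeasurable).1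
      (indepFun_innovationShift_self hG hmem), Measure.map_map (by fun_prop) (hshift.prodMk hpi)]
  simp [Function.comp_def, innovationShift]

end InnovationShift

theorem condIndepGiven_of_ae_eq_comp {Ω α β γ : Type*} [MeasurableSpace Ω] [MeasurableSpace α]
    [MeasurableSpace β] [MeasurableSpace γ] {μ : Measure Ω} [IsFiniteMeasure μ]
    {X : Ω → α} {Y : Ω → β} {Z : Ω → γ} {ρ : γ → β} (hX : Measurable X) (hZ : Measurable Z)
    (hρ : Measurable ρ) (hY : Y =ᵐ[μ] ρ ∘ Z) : CondIndepGiven μ X Y Z := by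
  rintro f g hf hg ⟨C, hC⟩ ⟨C', hC'⟩
  set m := MeasurableSpace.comap Z inferInstance
  have hgY : (fun ω => g (Y ω)) =ᵐ[μ] fun ω => g (ρ (Z ω)) := hY.fun_comp g
  have hmeas : StronglyMeasurable[m] fun ω => g (ρ (Z ω)) :=
    ((hg.comp hρ).comp (comap_measurable Z)).stronglyMeasurable
  have hgint : Integrable (fun ω => g (ρ (Z ω))) μ :=
    .of_bound ((hg.comp hρ).comp hZ).aestronglyMeasurable C' (ae_of_all _ fun _ => hC' _)
  have hfint : Integrable (fun ω => f (X ω)) μ :=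
    .of_bound (hf.comp hX).aestronglyMeasurable C (ae_of_all _ fun _ => hC _)
  have hfgint : Integrable (fun ω => f (X ω) * g (ρ (Z ω))) μ :=
    hfint.mul_bdd hgint.aestronglyMeasurable (ae_of_all _ fun _ => hC' _)
  have hcond : μ[(fun ω => g (Y ω))|m] =ᵐ[μ] fun ω => g (ρ (Z ω)) :=
    (condExp_congr_ae hgY).trans (by rw [condExp_of_stronglyMeasurable hZ.comap_le hmeas hgint])
  have hprod : (fun ω => f (X ω) * g (Y ω)) =ᵐ[μ] fun ω => f (X ω) * g (ρ (Z ω)) :=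
    EventuallyEq.rfl.mul hgY
  exact ((condExp_congr_ae hprod).trans
    (condExp_mul_of_stronglyMeasurable_right hmeas hfgint hfint)).trans
    (EventuallyEq.rfl.mul hcond.symm)

theorem sub_ae_eq_coeFn_sub {Ω : Type*} [MeasurableSpace Ω] {μ : Measure Ω} {f g : Lp ℝ 2 μ}
    {g' : Ω → ℝ} (h : g =ᵐ[μ] g') : (fun x => f x - g' x) =ᵐ[μ] (f - g : Lp ℝ 2 μ) :=
  (EventuallyEq.rfl.sub h.symm).trans (Lp.coeFn_sub f g).symm

section NullLaw

variable {E : Type*} [NormedAddCommGroup E] [NormedSpace ℝ E] [MeasurableSpace E] [BorelSpace E]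

theorem isGaussianMeasure_iff_isGaussian {μ : Measure E} : IsGaussianMeasure μ ↔ IsGaussian μ :=
  ⟨isGaussian_of_map_eq_gaussianReal, fun _ L => ⟨_, _, IsGaussian.map_eq_gaussianReal L⟩⟩

/-- The law of `x` with its innovations `G k x` replaced by the functions `w k (p x)` of `p x`. -/
def innovationReplacedLaw {F κ : Type*} [NormedAddCommGroup F] [NormedSpace ℝ F] [Fintype κ]
    (Q : Measure E) (p : E →L[ℝ] F) (G : κ → Lp ℝ 2 Q) (w : κ → F → ℝ) : Measure E :=
  Q.map (innovationShift Q G fun k x => G k x - w k (p x))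

theorem measurable_coeFn_sub_comp {Q : Measure E} {F κ : Type*} [NormedAddCommGroup F]
    [NormedSpace ℝ F] [MeasurableSpace F] [BorelSpace F] {p : E →L[ℝ] F} {w : κ → F → ℝ}
    (G : κ → Lp ℝ 2 Q) (hw : ∀ k, Measurable (w k)) (k : κ) :
    Measurable fun x => G k x - w k (p x) :=
  (Lp.stronglyMeasurable (G k)).measurable.sub ((hw k).comp p.continuous.measurable)

variable [CompleteSpace E] [SecondCountableTopology E] {Q : Measure E} [IsGaussian Q]

theorem covForm_eq_inner_centeredDual (L₁ L₂ : StrongDual ℝ E) :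
    covForm Q L₁ L₂ = ⟪centeredDual Q L₁, centeredDual Q L₂⟫ := by
  rw [inner_L2_eq_integral_mul, covForm, IsGaussian.integral_dual, IsGaussian.integral_dual]
  exact integral_congr_ae ((coeFn_centeredDual L₁).mul (coeFn_centeredDual L₂)).symm

theorem hasInjectiveCovariance_iff_injective_centeredDual :
    HasInjectiveCovariance Q ↔ Function.Injective (centeredDual Q) := by
  rw [injective_iff_map_eq_zero, HasInjectiveCovariance]
  refine forall_congr' fun L => imp_congr_left ⟨fun h => ?_, fun h L' => ?_⟩
  · exact inner_self_eq_zero.1 ((covForm_eq_inner_centeredDual L L).symm.trans (h L))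
  · rw [covForm_eq_inner_centeredDual, h, inner_zero_left]

variable {F : Type*} [NormedAddCommGroup F] [NormedSpace ℝ F] {p : E →L[ℝ] F}
  {κ : Type*} [Fintype κ] {G W : κ → Lp ℝ 2 Q} {w : κ → F → ℝ}

theorem isGaussian_innovationReplacedLaw (hG : ∀ k, G k ∈ gaussianSpace Q (.id ℝ E))
    (hW : ∀ k, W k ∈ gaussianSpace Q p) (hwW : ∀ k, W k =ᵐ[Q] w k ∘ p) :
    IsGaussian (innovationReplacedLaw Q p G w) :=
  (hasGaussianLaw_innovationShift_prodMk
    (fun k => sub_mem (hG k) (gaussianSpace_le_gaussianSpace_id (hW k)))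
    (fun k => sub_ae_eq_coeFn_sub (hwW k))).fst.isGaussian_map

variable [MeasurableSpace F] [BorelSpace F]

theorem map_innovationReplacedLaw (hG : ∀ k, G k ∈ (gaussianSpace Q p)ᗮ)
    (hw : ∀ k, Measurable (w k)) : (innovationReplacedLaw Q p G w).map p = Q.map p := by
  rw [innovationReplacedLaw, Measure.map_map p.continuous.measurable
    (measurable_innovationShift (measurable_coeFn_sub_comp G hw))]
  exact congrArg Q.map (funext fun x => map_innovationShift hG x)

theorem hasInjectiveCovariance_innovationReplacedLaw (hQ : HasInjectiveCovariance Q)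
    (hG : ∀ k, G k ∈ gaussianSpace Q (.id ℝ E)) (hW : ∀ k, W k ∈ gaussianSpace Q p)
    (hw : ∀ k, Measurable (w k)) (hwW : ∀ k, W k =ᵐ[Q] w k ∘ p)
    (hind : LinearIndependent ℝ fun k => ((centeredDual Q).range ⊔
      Submodule.span ℝ (Set.range G)).mkQ (W k)) :
    HasInjectiveCovariance (innovationReplacedLaw Q p G w) := by
  have := isGaussian_innovationReplacedLaw hG hW hwW
  rw [hasInjectiveCovariance_iff_injective_centeredDual, injective_iff_map_eq_zero] at hQ ⊢
  intro L hL
  set c : κ → ℝ := fun k => ⟪G k, centeredDual Q L⟫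
  set N := (centeredDual Q).range ⊔ Submodule.span ℝ (Set.range G)
  have hVar := norm_sq_centeredDual (Q := innovationReplacedLaw Q p G w) L
  rw [hL, norm_zero, innovationReplacedLaw, variance_map_innovationShift
    (fun k => sub_mem (hG k) (gaussianSpace_le_gaussianSpace_id (hW k)))
    (measurable_coeFn_sub_comp G hw) (fun k => sub_ae_eq_coeFn_sub (hwW k))] at hVar
  have hzero : centeredDual Q L - ∑ k, c k • (G k - W k) = 0 :=
    norm_eq_zero.1 (pow_eq_zero_iff two_ne_zero |>.1 (hVar.symm.trans (zero_pow two_ne_zero)))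
  have hmem : ∑ k, c k • W k ∈ N := by
    have hsum : ∑ k, c k • W k = ∑ k, c k • G k - centeredDual Q L := by
      simp only [smul_sub, Finset.sum_sub_distrib, ← sub_add] at hzero
      rw [← sub_eq_zero, ← hzero]
      abel
    rw [hsum]
    exact sub_mem (Submodule.mem_sup_right (sum_mem fun k _ => Submodule.smul_mem _ _
      (Submodule.subset_span ⟨k, rfl⟩))) (Submodule.mem_sup_left ⟨L, rfl⟩)
  have hc : ∀ k, c k = 0 := Fintype.linearIndependent_iff.1 hind c <| by
    simpa only [map_sum, map_smul] using N.mkQ_apply _ |>.trans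
      ((Submodule.Quotient.mk_eq_zero N).2 hmem)
  exact hQ L (by simpa [hc] using hzero)

theorem exists_measurable_ae_eq_comp_innovationReplacedLaw
    (hG : ∀ k, G k ∈ (gaussianSpace Q p)ᗮ) (hW : ∀ k, W k ∈ gaussianSpace Q p)
    (hw : ∀ k, Measurable (w k)) (hwW : ∀ k, W k =ᵐ[Q] w k ∘ p) {L : StrongDual ℝ E}
    (hL : centeredDual Q L - ∑ k, ⟪G k, centeredDual Q L⟫ • G k ∈ gaussianSpace Q p) :
    ∃ ρ : F → ℝ, Measurable ρ ∧ L =ᵐ[innovationReplacedLaw Q p G w] ρ ∘ p := by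
  have hmem : centeredDual Q L - ∑ k, ⟪G k, centeredDual Q L⟫ • (G k - W k) ∈
      gaussianSpace Q p := by
    simp only [smul_sub, Finset.sum_sub_distrib, ← sub_add]
    exact add_mem hL (sum_mem fun k _ => Submodule.smul_mem _ _ (hW k))
  obtain ⟨ρ, hρ, hLρ⟩ := exists_measurable_comp_of_mem_gaussianSpace hmem
  refine ⟨fun z => ρ z + L (∫ y, y ∂Q), hρ.add_const _, ?_⟩
  have hshift := dual_innovationShift_ae_eq (G := G)
    (U := fun k x => G k x - w k (p x)) (fun k => sub_ae_eq_coeFn_sub (hwW k)) L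
  refine (ae_map_iff (measurable_innovationShift (measurable_coeFn_sub_comp G hw)).aemeasurable
    (measurableSet_eq_fun L.continuous.measurable
      ((hρ.add_const _).comp p.continuous.measurable))).2 ?_
  filter_upwards [hLρ, hshift] with x hx hLx
  rw [Function.comp_apply] at hLx hx
  rw [hLx, hx, Function.comp_apply, map_innovationShift hG]

theorem condIndepGiven_innovationReplacedLaw {α ι : Type*} [MeasurableSpace α] [Finite ι]
    {X : E → α} (hX : Measurable X) {Y : E →L[ℝ] ι → ℝ}
    (hG : ∀ k, G k ∈ (gaussianSpace Q p)ᗮ) (hW : ∀ k, W k ∈ gaussianSpace Q p)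
    (hw : ∀ k, Measurable (w k)) (hwW : ∀ k, W k =ᵐ[Q] w k ∘ p)
    (hY : ∀ i, centeredDual Q (.proj i ∘L Y) -
      ∑ k, ⟪G k, centeredDual Q (.proj i ∘L Y)⟫ • G k ∈ gaussianSpace Q p) :
    CondIndepGiven (innovationReplacedLaw Q p G w) X Y p := by
  have : IsFiniteMeasure (innovationReplacedLaw Q p G w) := by
    unfold innovationReplacedLaw
    infer_instance
  choose ρ hρ hYρ using fun i =>
    exists_measurable_ae_eq_comp_innovationReplacedLaw hG hW hw hwW (hY i)
  refine condIndepGiven_of_ae_eq_comp (ρ := fun z i => ρ i z) hX p.continuous.measurable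
    (measurable_pi_lambda _ hρ) ?_
  filter_upwards [ae_all_iff.2 hYρ] with x hx
  exact funext hx

theorem innovationReplacedLaw_eq_map (hG : ∀ k, G k ∈ (gaussianSpace Q p)ᗮ)
    (hw : ∀ k, Measurable (w k)) :
    innovationReplacedLaw Q p G w = (Q.map (innovationShift Q G fun k => G k)).map
      (fun r => r + ∑ k, w k (p r) • cameronMartinVector Q (G k)) := by
  have hp := p.continuous.measurable
  rw [Measure.map_map (by fun_prop) (measurable_innovationShift fun k =>
    (Lp.stronglyMeasurable (G k)).measurable), innovationReplacedLaw]
  congr 1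
  ext1 x
  rw [Function.comp_apply, map_innovationShift hG]
  simp only [innovationShift, sub_smul, Finset.sum_sub_distrib, sub_add]

end NullLaw

theorem exists_linearIndependent_nat_of_not_finiteDimensional {K V : Type*} [DivisionRing K]
    [AddCommGroup V] [Module K V] {S : Submodule K V} (hS : ¬ FiniteDimensional K S) :
    ∃ v : ℕ → V, (∀ j, v j ∈ S) ∧ LinearIndependent K v := by
  let b := Module.Basis.ofVectorSpace K S
  have hinf : Infinite (Module.Basis.ofVectorSpaceIndex K S) := by
    rw [← not_finite_iff_infinite]
    exact fun _ => hS (Module.Finite.of_basis b)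
  exact ⟨fun j => b (Infinite.natEmbedding _ j), fun j => (b _).2,
    (b.linearIndependent.comp _ (Infinite.natEmbedding _).injective).map' S.subtype S.ker_subtype⟩

theorem exists_orthonormal_nat_of_not_finiteDimensional {𝕜 H : Type*} [RCLike 𝕜]
    [NormedAddCommGroup H] [InnerProductSpace 𝕜 H] {S : Submodule 𝕜 H}
    (hS : ¬ FiniteDimensional 𝕜 S) : ∃ ζ : ℕ → H, Orthonormal 𝕜 ζ ∧ ∀ j, ζ j ∈ S := by
  obtain ⟨v, hvS, hv⟩ := exists_linearIndependent_nat_of_not_finiteDimensional hS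
  refine ⟨_, InnerProductSpace.gramSchmidtNormed_orthonormal hv, fun j => ?_⟩
  have hspan : Submodule.span 𝕜 (Set.range (InnerProductSpace.gramSchmidtNormed 𝕜 v)) ≤ S := by
    rw [InnerProductSpace.span_gramSchmidtNormed_range, InnerProductSpace.span_gramSchmidt]
    exact Submodule.span_le.2 (Set.range_subset_iff.2 hvS)
  exact hspan (Submodule.subset_span ⟨j, rfl⟩)

theorem exists_linearIndependent_mkQ_of_forall_fg {K V : Type*} [DivisionRing K] [AddCommGroup V]
    [Module K V] {S N : Submodule K V} (h : ∀ W : Submodule K V, W.FG → ¬ S ≤ N ⊔ W) :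
    ∃ τ : ℕ → V, (∀ j, τ j ∈ S) ∧ LinearIndependent K fun j => N.mkQ (τ j) := by
  have hinf : ¬ FiniteDimensional K (S.map N.mkQ) := by
    intro hfin
    obtain ⟨g, hg⟩ := N.mkQ.exists_rightInverse_of_surjective N.range_mkQ
    refine h _ ((Module.Finite.iff_fg.1 hfin).map g) ?_
    rw [← Submodule.comap_map_mkQ, ← Submodule.map_le_iff_le_comap, ← Submodule.map_comp, hg,
      Submodule.map_id]
  obtain ⟨v, hvS, hv⟩ := exists_linearIndependent_nat_of_not_finiteDimensional hinf
  choose τ hτS hτ using hvS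
  exact ⟨τ, hτS, by simpa only [hτ] using hv⟩

theorem exists_orthonormal_mem_orthogonal_sub_sum_mem {H ι : Type*} [NormedAddCommGroup H]
    [InnerProductSpace ℝ H] [Finite ι] {K M : Submodule ℝ H} [K.HasOrthogonalProjection]
    (hKM : K ≤ M) {y : ι → H} (hy : ∀ i, y i ∈ M) :
    ∃ (r : ℕ) (G : Fin r → H), Orthonormal ℝ G ∧ (∀ k, G k ∈ M) ∧ (∀ k, G k ∈ Kᗮ) ∧
      ∀ i, y i - ∑ k, ⟪G k, y i⟫ • G k ∈ K := by
  set W := Submodule.span ℝ (Set.range fun i => y i - K.starProjection (y i))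
  have hfin : FiniteDimensional ℝ W := .span_of_finite ℝ (Set.finite_range _)
  have hWM : W ≤ M := Submodule.span_le.2 <| Set.range_subset_iff.2 fun i =>
    sub_mem (hy i) (hKM (Submodule.starProjection_apply_mem _ _))
  have hWK : W ≤ Kᗮ := Submodule.span_le.2 <| Set.range_subset_iff.2 fun i =>
    Submodule.sub_starProjection_mem_orthogonal _
  let b := stdOrthonormalBasis ℝ W
  refine ⟨Module.finrank ℝ W, fun k => b k, b.orthonormal.comp_linearIsometry W.subtypeₗᵢ,
    fun k => hWM (b k).2, fun k => hWK (b k).2, fun i => ?_⟩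
  have hinner (k) : ⟪(b k : H), y i⟫ = ⟪(b k : H), y i - K.starProjection (y i)⟫ := by
    rw [inner_sub_right, Submodule.inner_left_of_mem_orthogonal
      (Submodule.starProjection_apply_mem _ _) (hWK (b k).2), sub_zero]
  have hsum : ∑ k, ⟪(b k : H), y i⟫ • (b k : H) = y i - K.starProjection (y i) := by
    simpa [hinner] using
      congrArg Subtype.val (b.sum_repr' ⟨_, Submodule.subset_span ⟨i, rfl⟩⟩)
  rw [hsum, sub_sub_cancel]
  exact Submodule.starProjection_apply_mem _ _

theorem exists_preimage_norm_le_of_isClosed_of_le_range {𝕜 V W : Type*}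
    [NontriviallyNormedField 𝕜] [NormedAddCommGroup V] [NormedSpace 𝕜 V] [CompleteSpace V]
    [NormedAddCommGroup W] [NormedSpace 𝕜 W] [CompleteSpace W] {T : V →L[𝕜] W}
    {S : Submodule 𝕜 W} (hS : IsClosed (S : Set W)) (hST : S ≤ T.range) :
    ∃ C, ∀ y ∈ S, ∃ x, T x = y ∧ ‖x‖ ≤ C * ‖y‖ := by
  let D := S.comap T.toLinearMap
  have : CompleteSpace D := (hS.preimage T.continuous).completeSpace_coe
  have : CompleteSpace S := hS.completeSpace_coe
  let T' : D →L[𝕜] S := (T ∘L D.subtypeL).codRestrict S fun x => x.2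
  have hsurj : Function.Surjective T' := by
    rintro ⟨y, hy⟩
    obtain ⟨x, rfl⟩ := hST hy
    exact ⟨⟨x, hy⟩, rfl⟩
  obtain ⟨C, -, hC⟩ := T'.exists_preimage_norm_le hsurj
  refine ⟨C, fun y hy => ?_⟩
  obtain ⟨x, hx, hxy⟩ := hC ⟨y, hy⟩
  exact ⟨x, congrArg Subtype.val hx, hxy⟩

theorem frequently_mem_of_iIndepFun {Ω β : Type*} [MeasurableSpace Ω] [MeasurableSpace β]
    {μ : Measure Ω} {ν : Measure β} {X : ℕ → Ω → β} (hX : ∀ j, Measurable (X j))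
    (hind : iIndepFun X μ) (hlaw : ∀ j, μ.map (X j) = ν) {B : Set β} (hB : MeasurableSet B)
    (hνB : ν B ≠ 0) : ∀ᵐ x ∂μ, ∃ᶠ j in atTop, X j x ∈ B := by
  have := hind.isProbabilityMeasure
  have hset : ∀ j, MeasurableSet (X j ⁻¹' B) := fun j => hX j hB
  have hindSet : iIndepSet (fun j => X j ⁻¹' B) μ := (iIndepSet_iff_meas_biInter hset).2
    fun s => hind.measure_inter_preimage_eq_mul s fun _ _ => hB
  have hsum : ∑' j, μ (X j ⁻¹' B) = ∞ := by
    simp only [← Measure.map_apply (hX _) hB, hlaw, ENNReal.tsum_const_eq_top_of_ne_zero hνB]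
  have hlimsup := measure_limsup_eq_one hset hindSet hsum
  rw [← measure_univ (μ := μ), ← ae_eq_univ_iff_measure_eq
    (MeasurableSet.measurableSet_limsup hset).nullMeasurableSet, eventuallyEq_univ] at hlimsup
  filter_upwards [hlimsup] with x hx
  exact mem_limsup_iff_frequently_mem.1 hx

theorem gaussianReal_Ioi_ne_zero (m a : ℝ) {v : ℝ≥0} (hv : v ≠ 0) :
    gaussianReal m v (Set.Ioi a) ≠ 0 := fun h => by
  simpa using gaussianReal_absolutelyContinuous' m hv h

theorem not_finiteDimensional_range_dual_comp {E F : Type*} [NormedAddCommGroup E]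
    [NormedSpace ℝ E] [NormedAddCommGroup F] [NormedSpace ℝ F] {p : E →L[ℝ] F}
    (hp : ¬ FiniteDimensional ℝ p.range) :
    ¬ FiniteDimensional ℝ ((ContinuousLinearMap.compL ℝ E F ℝ).flip p).range := by
  intro hfin
  let D := ((ContinuousLinearMap.compL ℝ E F ℝ).flip p).range
  let evalOnD : E →ₗ[ℝ] Module.Dual ℝ D :=
    (ContinuousLinearMap.coeLM ℝ ∘ₗ D.subtype).flip
  have hker : evalOnD.ker ≤ p.ker := fun x hx =>
    SeparatingDual.eq_zero_of_forall_dual_eq_zero (R := ℝ) fun L =>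
      LinearMap.congr_fun hx ⟨L ∘L p, L, rfl⟩
  exact hp (Module.Finite.iff_fg.2
    (Submodule.range_fg_iff_ker_cofg.2 ((Submodule.CoFG.ker evalOnD).of_le hker)))

section FiniteExtension

variable {E : Type*} [NormedAddCommGroup E] [NormedSpace ℝ E] [MeasurableSpace E] [BorelSpace E]
  {F : Type*} [NormedAddCommGroup F] [NormedSpace ℝ F] {p : E →L[ℝ] F} {Q : Measure E}
  [CompleteSpace E] [SecondCountableTopology E] [IsGaussian Q]

theorem exists_orthonormal_nat_centeredDual_comp (hQ : HasInjectiveCovariance Q)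
    (hp : ¬ FiniteDimensional ℝ p.range) :
    ∃ L : ℕ → StrongDual ℝ F, Orthonormal ℝ fun j => centeredDual Q (L j ∘L p) := by
  let D := ((ContinuousLinearMap.compL ℝ E F ℝ).flip p).range
  have hinj := hasInjectiveCovariance_iff_injective_centeredDual.1 hQ
  have hinf : ¬ FiniteDimensional ℝ (D.map (centeredDual Q).toLinearMap) := fun _ =>
    not_finiteDimensional_range_dual_comp hp
      ((D.equivMapOfInjective _ hinj).symm.finiteDimensional)
  obtain ⟨ζ, hζ, hmem⟩ := exists_orthonormal_nat_of_not_finiteDimensional hinf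
  have hrange (j : ℕ) : ∃ L : StrongDual ℝ F, centeredDual Q (L ∘L p) = ζ j := by
    obtain ⟨_, ⟨L, rfl⟩, hL⟩ := hmem j
    exact ⟨L, hL⟩
  choose L hL using hrange
  exact ⟨L, by simpa only [hL] using hζ⟩

theorem exists_ae_abs_le_of_le_range_centeredDual_sup {S W : Submodule ℝ (Lp ℝ 2 Q)}
    (hS : IsClosed (S : Set (Lp ℝ 2 Q))) (hW : W.FG) (h : S ≤ (centeredDual Q).range ⊔ W) :
    ∃ b : E → ℝ, ∀ y ∈ S, ‖y‖ = 1 → ∀ᵐ x ∂Q, |y x| ≤ b x := by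
  obtain ⟨q, f, rfl⟩ := Submodule.fg_iff_exists_fin_generating_family.1 hW
  let T := (centeredDual Q).coprod (Fintype.linearCombination ℝ f).toContinuousLinearMap
  have hrange : T.range = (centeredDual Q).range ⊔ Submodule.span ℝ (Set.range f) := by
    rw [← Fintype.range_linearCombination]
    exact LinearMap.range_coprod _ _
  obtain ⟨C, hC⟩ := exists_preimage_norm_le_of_isClosed_of_le_range hS (h.trans_eq hrange.symm)
  set m := ∫ x, x ∂Q
  refine ⟨fun x => C * ‖x - m‖ + ∑ i, C * |f i x|, fun y hy hnorm => ?_⟩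
  obtain ⟨⟨L, a⟩, rfl, hLa⟩ := hC y hy
  rw [hnorm, mul_one] at hLa
  have hT : T (L, a) = centeredDual Q L + ∑ i, a i • f i := by
    simp [T, Fintype.linearCombination_apply]
  filter_upwards [coeFn_centeredDual L, coeFn_sum_smul_L2 a f,
    Lp.coeFn_add (centeredDual Q L) (∑ i, a i • f i)] with x hL hsum hadd
  rw [hT, hadd, Pi.add_apply, hL, hsum, ← map_sub]
  refine (abs_add_le _ _).trans (add_le_add ?_ ((Finset.abs_sum_le_sum_abs _ _).trans
    (Finset.sum_le_sum fun i _ => ?_)))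
  · exact L.le_of_opNorm_le ((norm_fst_le (L, a)).trans hLa) _
  · rw [abs_mul]
    exact mul_le_mul_of_nonneg_right
      ((norm_le_pi_norm a i).trans ((norm_snd_le (L, a)).trans hLa)) (abs_nonneg _)

theorem not_gaussianSpace_le_range_centeredDual_sup (hQ : HasInjectiveCovariance Q)
    (hp : ¬ FiniteDimensional ℝ p.range) {W : Submodule ℝ (Lp ℝ 2 Q)} (hW : W.FG) :
    ¬ gaussianSpace Q p ≤ (centeredDual Q).range ⊔ W := by
  intro hle
  obtain ⟨L, hL⟩ := exists_orthonormal_nat_centeredDual_comp hQ hp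
  set ζ : ℕ → Lp ℝ 2 Q := fun j => centeredDual Q (L j ∘L p)
  have hmem (j : ℕ) : ζ j ∈ gaussianSpace Q p := centeredDual_comp_mem_gaussianSpace (L j)
  obtain ⟨b, hb⟩ := exists_ae_abs_le_of_le_range_centeredDual_sup isClosed_gaussianSpace hW hle
  have hmem' (j : ℕ) : ζ j ∈ gaussianSpace Q (.id ℝ E) :=
    gaussianSpace_le_gaussianSpace_id (hmem j)
  have hfreq (N : ℕ) : ∀ᵐ x ∂Q, ∃ᶠ j in atTop, ζ j x ∈ Set.Ioi (N : ℝ) :=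
    frequently_mem_of_iIndepFun (fun j => (Lp.stronglyMeasurable (ζ j)).measurable)
      (iIndepFun_of_orthonormal_gaussianSpace hL hmem')
      (fun j => map_eq_gaussianReal_of_norm_eq_one (hmem' j) (hL.1 j)) measurableSet_Ioi
      (gaussianReal_Ioi_ne_zero 0 N one_ne_zero)
  have hfalse : ∀ᵐ _ ∂Q, False := by
    filter_upwards [ae_all_iff.2 hfreq, ae_all_iff.2 fun j => hb (ζ j) (hmem j) (hL.1 j)]
      with x hunbounded hbounded
    obtain ⟨N, hN⟩ := exists_nat_ge (b x)
    obtain ⟨j, hj⟩ := (hunbounded N).exists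
    exact (hj.trans_le (le_abs_self _)).not_ge ((hbounded j).trans hN)
  exact hfalse.exists.choose_spec

end FiniteExtension

section LawOfLargeNumbers

variable {ι Ω β : Type*}

/-- The matrix with entries `ζ j (v i) / √N` for `i : ι` and `j < N`, where `v` is a sample indexed
by `ι`. -/
def sampleMatrix (ζ : ℕ → Ω → ℝ) (N : ℕ) (v : ι → Ω) : Matrix ι (Fin N) ℝ :=
  .of fun i j => (√N)⁻¹ * ζ j (v i)

theorem sampleMatrix_mul_transpose_apply (ζ : ℕ → Ω → ℝ) (N : ℕ) (v : ι → Ω) (i i' : ι) :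
    (sampleMatrix ζ N v * (sampleMatrix ζ N v)ᵀ) i i' =
      (∑ j ∈ Finset.range N, ζ j (v i) * ζ j (v i')) / N := by
  have hsqrt : (√N)⁻¹ * (√N)⁻¹ = (N : ℝ)⁻¹ := by
    rw [← mul_inv, Real.mul_self_sqrt N.cast_nonneg]
  simp only [sampleMatrix, Matrix.mul_apply, Matrix.transpose_apply, Matrix.of_apply,
    mul_mul_mul_comm _ (ζ _ (v i)), hsqrt, ← Finset.mul_sum]
  rw [Fin.sum_univ_eq_sum_range fun j => ζ j (v i) * ζ j (v i'), div_eq_inv_mul]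

variable [Fintype ι] [MeasurableSpace Ω] [MeasurableSpace β] {μ : Measure Ω}
  [IsProbabilityMeasure μ]

theorem indepFun_pi_comp {f g : Ω → β} (hf : Measurable f) (hg : Measurable g)
    (hfg : IndepFun f g μ) :
    IndepFun (fun (v : ι → Ω) i => f (v i)) (fun v i => g (v i)) (Measure.pi fun _ => μ) := by
  have := Measure.isProbabilityMeasure_map (μ := μ) hf.aemeasurable
  have := Measure.isProbabilityMeasure_map (μ := μ) hg.aemeasurable
  have := Measure.isProbabilityMeasure_map (μ := μ) (hf.prodMk hg).aemeasurable
  have hpair : (Measure.pi fun _ : ι => μ).map (fun v i => (f (v i), g (v i))) =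
      Measure.pi fun _ => (μ.map f).prod (μ.map g) := by
    rw [Measure.pi_map_pi fun _ => (hf.prodMk hg).aemeasurable,
      (indepFun_iff_map_prod_eq_prod_map_map hf.aemeasurable hg.aemeasurable).1 hfg]
  have hf' : Measurable fun (v : ι → Ω) i => f (v i) := by fun_prop
  have hg' : Measurable fun (v : ι → Ω) i => g (v i) := by fun_prop
  rw [indepFun_iff_map_prod_eq_prod_map_map hf'.aemeasurable hg'.aemeasurable,
    Measure.pi_map_pi fun _ => hf.aemeasurable, Measure.pi_map_pi fun _ => hg.aemeasurable,
    ← (measurePreserving_arrowProdEquivProdArrow β β ι _ _).map_eq, ← hpair,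
    Measure.map_map (MeasurableEquiv.measurable _) (by fun_prop)]
  rfl

theorem strong_law_ae_pi {ν : Measure β} {X : ℕ → Ω → β} (hX : ∀ j, Measurable (X j))
    (hindep : Pairwise fun j l => IndepFun (X j) (X l) μ) (hlaw : ∀ j, μ.map (X j) = ν)
    {φ : (ι → β) → ℝ} (hφ : Measurable φ) (hint : Integrable φ (Measure.pi fun _ => ν)) :
    ∀ᵐ v ∂Measure.pi fun _ : ι => μ, Tendsto
      (fun N : ℕ => (∑ j ∈ Finset.range N, φ fun i => X j (v i)) / N) atTop
      (𝓝 (∫ u, φ u ∂Measure.pi fun _ => ν)) := by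
  set ξ : ℕ → (ι → Ω) → ι → β := fun j v i => X j (v i)
  have hξ (j : ℕ) : Measurable (ξ j) := by fun_prop
  have hξlaw (j : ℕ) : (Measure.pi fun _ => μ).map (ξ j) = Measure.pi fun _ => ν := by
    have : IsProbabilityMeasure (μ.map (X j)) :=
      Measure.isProbabilityMeasure_map (hX j).aemeasurable
    rw [Measure.pi_map_pi fun _ => (hX j).aemeasurable, hlaw]
  have hident (j : ℕ) : IdentDistrib (ξ j) (ξ 0) (Measure.pi fun _ => μ) (Measure.pi fun _ => μ) :=
    ⟨(hξ j).aemeasurable, (hξ 0).aemeasurable, (hξlaw j).trans (hξlaw 0).symm⟩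
  have hmean : ∫ v, φ (ξ 0 v) ∂(Measure.pi fun _ => μ) =
      ∫ u, φ u ∂(Measure.pi fun _ => ν) := by
    rw [← hξlaw 0, integral_map (hξ 0).aemeasurable hφ.aestronglyMeasurable]
  rw [← hmean]
  refine strong_law_ae_real (fun j v => φ (ξ j v)) ?_ (fun j l hjl => ?_)
    fun j => (hident j).comp hφ
  · rw [← hξlaw 0] at hint
    exact hint.comp_measurable (hξ 0)
  · exact (indepFun_pi_comp (hX j) (hX l) (hindep hjl)).comp hφ hφ

theorem memLp_eval_stdNormalPi (i : ι) : MemLp (fun u => u i) 2 (stdNormalPi ι) :=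
  (memLp_id_gaussianReal 2).comp_measurePreserving
    (measurePreserving_eval (fun _ : ι => gaussianReal 0 1) i)

variable [DecidableEq ι]

theorem integral_mul_eval_stdNormalPi (i i' : ι) :
    ∫ u, u i * u i' ∂stdNormalPi ι = (1 : Matrix ι ι ℝ) i i' := by
  have hmean (i : ι) : ∫ u, u i ∂stdNormalPi ι = 0 := by
    rw [integral_comp_eval (μ := fun _ => gaussianReal 0 1) (f := fun x => x) (by fun_prop),
      integral_id_gaussianReal]
  obtain rfl | hne := eq_or_ne i i'
  · rw [Matrix.one_apply_eq, integral_comp_eval (μ := fun _ => gaussianReal 0 1)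
      (f := fun x => x * x) (by fun_prop)]
    have hvar := variance_fun_id_gaussianReal (μ := 0) (v := 1)
    rw [variance_of_integral_eq_zero (by fun_prop) integral_id_gaussianReal] at hvar
    simpa only [sq, NNReal.coe_one] using hvar
  · have hind : iIndepFun (fun i (u : ι → ℝ) => u i) (stdNormalPi ι) :=
      iIndepFun_pi fun _ => aemeasurable_id
    rw [Matrix.one_apply_ne hne, (hind.indepFun hne).integral_fun_mul_eq_mul_integral
      (memLp_eval_stdNormalPi i).aestronglyMeasurable
      (memLp_eval_stdNormalPi i').aestronglyMeasurable, hmean, zero_mul]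

theorem tendsto_sampleMatrix_mul_transpose {ζ : ℕ → Ω → ℝ} (hζ : ∀ j, Measurable (ζ j))
    (hindep : Pairwise fun j l => IndepFun (ζ j) (ζ l) μ)
    (hlaw : ∀ j, μ.map (ζ j) = gaussianReal 0 1) :
    ∀ᵐ v ∂Measure.pi fun _ : ι => μ,
      Tendsto (fun N => sampleMatrix ζ N v * (sampleMatrix ζ N v)ᵀ) atTop (𝓝 1) := by
  have hentry (i i' : ι) := strong_law_ae_pi hζ hindep hlaw (φ := fun u => u i * u i')
    (by fun_prop) ((memLp_eval_stdNormalPi i).integrable_mul (memLp_eval_stdNormalPi i'))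
  filter_upwards [ae_all_iff.2 fun i => ae_all_iff.2 (hentry i)] with v hv
  refine tendsto_pi_nhds.2 fun i => tendsto_pi_nhds.2 fun i' => ?_
  simpa only [sampleMatrix_mul_transpose_apply, integral_mul_eval_stdNormalPi] using hv i i'

end LawOfLargeNumbers

theorem tendsto_stdNormalPi_preimage_mulVec_add {ι α : Type*} [Fintype ι] [DecidableEq ι]
    {l : Filter α} [l.IsCountablyGenerated] {κ : α → Type*} [∀ a, Fintype (κ a)]
    {B : ∀ a, Matrix ι (κ a) ℝ} (hB : Tendsto (fun a => B a * (B a)ᵀ) l (𝓝 1)) {s : α → ι → ℝ}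
    (hs : Tendsto s l (𝓝 0)) {S : Set (ι → ℝ)} (hS : MeasurableSet S) :
    Tendsto (fun a => stdNormalPi (κ a) ((fun g => B a *ᵥ g + s a) ⁻¹' S)) l
      (𝓝 (stdNormalPi ι S)) := by
  rw [← ENNReal.tendsto_toReal_iff (fun _ => measure_ne_top _ _) (measure_ne_top _ _)]
  have hlim := tendsto_integral_stdNormalPi_mulVec_add hB hs (f := S.indicator 1)
    (measurable_one.indicator hS) (C := 1)
    fun x => (norm_indicator_le_norm_self _ _).trans_eq norm_one
  refine (hlim.congr fun a => ?_).trans_eq ?_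
  · exact integral_indicator_one (hS.preimage (by fun_prop))
  · rw [integral_indicator_one hS]
    rfl

theorem prod_stdNormalPi_le_of_forall_mulVec_add_le {ι Ω : Type*} [Fintype ι] [DecidableEq ι]
    [MeasurableSpace Ω] {μ : Measure Ω} [IsProbabilityMeasure μ] {κ : ℕ → Type*}
    [∀ N, Fintype (κ N)] {B : ∀ N, Ω → Matrix ι (κ N) ℝ} {s : ℕ → Ω → ι → ℝ}
    (hmeas : ∀ N, Measurable fun y : Ω × (κ N → ℝ) => B N y.1 *ᵥ y.2 + s N y.1)
    (hB : ∀ᵐ v ∂μ, Tendsto (fun N => B N v * (B N v)ᵀ) atTop (𝓝 1))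
    (hs : ∀ᵐ v ∂μ, Tendsto (fun N => s N v) atTop (𝓝 0))
    {S : Set (Ω × (ι → ℝ))} (hS : MeasurableSet S) {C : ℝ≥0∞}
    (hC : ∀ N g, μ ((fun v => (v, B N v *ᵥ g + s N v)) ⁻¹' S) ≤ C) :
    μ.prod (stdNormalPi ι) S ≤ C := by
  set T : ∀ N, Ω × (κ N → ℝ) → Ω × (ι → ℝ) := fun N y => (y.1, B N y.1 *ᵥ y.2 + s N y.1)
  have hT (N : ℕ) : MeasurableSet (T N ⁻¹' S) := (measurable_fst.prodMk (hmeas N)) hS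
  have hlim : Tendsto (fun N => μ.prod (stdNormalPi (κ N)) (T N ⁻¹' S)) atTop
      (𝓝 (μ.prod (stdNormalPi ι) S)) := by
    simp only [Measure.prod_apply (hT _), Measure.prod_apply hS]
    refine tendsto_lintegral_of_dominated_convergence 1
      (fun N => measurable_measure_prodMk_left (hT N)) (fun N => ae_of_all _ fun v => prob_le_one)
      (by simp) ?_
    filter_upwards [hB, hs] with v hBv hsv
    exact tendsto_stdNormalPi_preimage_mulVec_add hBv hsv (hS.preimage measurable_prodMk_left)
  refine le_of_tendsto' hlim fun N => ?_
  rw [Measure.prod_apply_symm (hT N)]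
  exact (lintegral_mono fun g => hC N g).trans (by simp)

theorem map_uncurry_stdNormalPi {ι κ : Type*} [Fintype ι] [Fintype κ] :
    (Measure.pi fun _ : ι => stdNormalPi κ).map (MeasurableEquiv.curry ι κ ℝ).symm =
      stdNormalPi (ι × κ) := by
  simpa only [Measure.infinitePi_eq_pi] using
    Measure.infinitePi_map_curry_symm (ι := ι) (κ := κ) (X := ℝ) fun _ _ => gaussianReal 0 1

theorem kronecker_one_mulVec_apply {ι κ m : Type*} [Fintype κ] [DecidableEq κ]
    [Fintype m] (R : Matrix ι m ℝ)
    (g : m × κ → ℝ) (q : ι × κ) :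
    ((R ⊗ₖ (1 : Matrix κ κ ℝ)) *ᵥ g) q = ∑ j, R q.1 j * g (j, q.2) := by
  simp [Matrix.mulVec, dotProduct, Fintype.sum_prod_type, Matrix.kroneckerMap_apply,
    Matrix.one_apply]

theorem tendsto_kronecker_one_mul_transpose {ι κ α : Type*} [DecidableEq ι] [Fintype κ]
    [DecidableEq κ] {l : Filter α} {m : α → Type*} [∀ a, Fintype (m a)] {R : ∀ a, Matrix ι (m a) ℝ}
    (hR : Tendsto (fun a => R a * (R a)ᵀ) l (𝓝 1)) :
    Tendsto (fun a => (R a ⊗ₖ (1 : Matrix κ κ ℝ)) * (R a ⊗ₖ (1 : Matrix κ κ ℝ))ᵀ) l (𝓝 1) := by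
  have hgram (a : α) : (R a ⊗ₖ (1 : Matrix κ κ ℝ)) * (R a ⊗ₖ (1 : Matrix κ κ ℝ))ᵀ =
      (R a * (R a)ᵀ) ⊗ₖ (1 : Matrix κ κ ℝ) := by
    rw [← Matrix.kroneckerMap_transpose, ← Matrix.mul_kronecker_mul, Matrix.transpose_one, mul_one]
  simp only [hgram]
  rw [← Matrix.one_kronecker_one]
  refine tendsto_pi_nhds.2 fun q => tendsto_pi_nhds.2 fun q' => ?_
  exact (tendsto_pi_nhds.1 (tendsto_pi_nhds.1 hR q.1) q'.1).mul_const _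

section TranslatedSamples

variable {ι E κ : Type*} [NormedAddCommGroup E] [NormedSpace ℝ E] [MeasurableSpace E] [BorelSpace E]
  [SecondCountableTopology E] [Fintype κ]

/-- The sample `y.1` with its `i`-th observation translated by `∑ k, y.2 (i, k) • e k`. -/
def translatedSample (e : κ → E) (y : (ι → E) × (ι × κ → ℝ)) (i : ι) : E :=
  y.1 i + ∑ k, y.2 (i, k) • e k

theorem measurable_translatedSample (e : κ → E) :
    Measurable (translatedSample (ι := ι) e) := by
  unfold translatedSample
  fun_prop

variable [Fintype ι] {Λ : Measure E} [IsProbabilityMeasure Λ]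

theorem pi_map_translate (e : κ → E) {w : κ → E → ℝ} (hw : ∀ k, Measurable (w k)) :
    (Measure.pi fun _ : ι => Λ.map fun v => v + ∑ k, w k v • e k) =
      (Measure.pi fun _ => Λ).map fun v => translatedSample e (v, fun q => w q.2 (v q.1)) := by
  have hmeas : Measurable fun v => v + ∑ k, w k v • e k := by fun_prop
  have := Measure.isProbabilityMeasure_map (μ := Λ) hmeas.aemeasurable
  rw [← Measure.pi_map_pi fun _ => hmeas.aemeasurable]
  rfl

theorem pi_map_prod_translate (e : κ → E) :
    (Measure.pi fun _ : ι =>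
        (Λ.prod (stdNormalPi κ)).map fun y => y.1 + ∑ k, y.2 k • e k) =
      ((Measure.pi fun _ => Λ).prod (stdNormalPi (ι × κ))).map (translatedSample e) := by
  have hmeas : Measurable fun y : E × (κ → ℝ) => y.1 + ∑ k, y.2 k • e k := by fun_prop
  have := Measure.isProbabilityMeasure_map (μ := Λ.prod (stdNormalPi κ)) hmeas.aemeasurable
  have hcurry := Measure.map_prod_map (Measure.pi fun _ : ι => Λ)
    (Measure.pi fun _ : ι => stdNormalPi κ) measurable_id
    (MeasurableEquiv.curry ι κ ℝ).symm.measurable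
  rw [← Measure.pi_map_pi fun _ => hmeas.aemeasurable, ← map_uncurry_stdNormalPi,
    ← Measure.map_id (μ := Measure.pi fun _ : ι => Λ), hcurry,
    ← (measurePreserving_arrowProdEquivProdArrow E (κ → ℝ) ι _ _).map_eq,
    Measure.map_map (by fun_prop) (MeasurableEquiv.measurable _),
    Measure.map_map (measurable_translatedSample e) (by fun_prop)]
  rfl

theorem pi_map_prod_translate_le_of_forall {ζ : ℕ → E → ℝ} (hζ : ∀ j, Measurable (ζ j))
    (hindep : Pairwise fun j l => IndepFun (ζ j) (ζ l) Λ)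
    (hlaw : ∀ j, Λ.map (ζ j) = gaussianReal 0 1) {t : κ → E → ℝ} (ht : ∀ k, Measurable (t k))
    {e : κ → E} {A : Set (ι → E)} (hA : MeasurableSet A) {C : ℝ≥0∞}
    (hC : ∀ (N : ℕ) (a : κ → Fin N → ℝ) (c : ℝ), c ≠ 0 → (Measure.pi fun _ : ι =>
      Λ.map fun v => v + ∑ k, (∑ j, a k j * ζ j v + c * t k v) • e k) A ≤ C) :
    (Measure.pi fun _ : ι =>
      (Λ.prod (stdNormalPi κ)).map fun y => y.1 + ∑ k, y.2 k • e k) A ≤ C := by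
  classical
  set B : ∀ N, (ι → E) → Matrix (ι × κ) (Fin N × κ) ℝ := fun N v =>
    sampleMatrix ζ N v ⊗ₖ (1 : Matrix κ κ ℝ)
  set s : ℕ → (ι → E) → ι × κ → ℝ := fun N v q => (1 / ((N : ℝ) + 1)) * t q.2 (v q.1)
  have happly (N : ℕ) (v : ι → E) (g : Fin N × κ → ℝ) : B N v *ᵥ g + s N v = fun q =>
      ∑ j, (√N)⁻¹ * g (j, q.2) * ζ j (v q.1) + (1 / ((N : ℝ) + 1)) * t q.2 (v q.1) := by
    funext q
    simp only [Pi.add_apply, B, s, kronecker_one_mulVec_apply, sampleMatrix, Matrix.of_apply,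
      mul_right_comm]
  rw [pi_map_prod_translate, Measure.map_apply (measurable_translatedSample e) hA]
  refine prod_stdNormalPi_le_of_forall_mulVec_add_le (B := B) (s := s) (fun N => ?_) ?_ ?_
    (measurable_translatedSample e hA) fun N g => ?_
  · simp only [happly]
    fun_prop
  · filter_upwards [tendsto_sampleMatrix_mul_transpose hζ hindep hlaw] with v hv
    exact tendsto_kronecker_one_mul_transpose hv
  · refine ae_of_all _ fun v => tendsto_pi_nhds.2 fun q => ?_
    simpa only [s, Pi.zero_apply, zero_mul] using
      tendsto_one_div_add_atTop_nhds_zero_nat.mul_const (t q.2 (v q.1))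
  · have hnull := hC N (fun k j => (√N)⁻¹ * g (j, k)) (1 / ((N : ℝ) + 1)) (by positivity)
    rw [pi_map_translate e fun k => by fun_prop, Measure.map_apply ?_ hA] at hnull
    · simp only [happly]
      exact hnull
    · exact (measurable_translatedSample e).comp (by fun_prop)

end TranslatedSamples

theorem indepFun_map {Ω Ω' β γ : Type*} [MeasurableSpace Ω] [MeasurableSpace Ω']
    [MeasurableSpace β] [MeasurableSpace γ] {μ : Measure Ω} {T : Ω → Ω'} {f : Ω' → β} {g : Ω' → γ}
    (hT : Measurable T) (hf : Measurable f) (hg : Measurable g)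
    (h : IndepFun (f ∘ T) (g ∘ T) μ) : IndepFun f g (μ.map T) := by
  refine indepFun_iff_measure_inter_preimage_eq_mul.2 fun s t hs ht => ?_
  rw [Measure.map_apply hT (hf hs), Measure.map_apply hT (hg ht),
    Measure.map_apply hT ((hf hs).inter (hg ht))]
  exact h.measure_inter_preimage_eq_mul s t hs ht

theorem linearIndependent_mkQ_sum_add_smul {K V κ ι : Type*} [Field K] [AddCommGroup V]
    [Module K V] [Fintype ι] {N : Submodule K V} {ζ : ι → V} (hζ : ∀ j, ζ j ∈ N) {τ : κ → V}
    (hτ : LinearIndependent K fun k => N.mkQ (τ k)) (a : κ → ι → K) {c : K} (hc : c ≠ 0) :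
    LinearIndependent K fun k => N.mkQ (∑ j, a k j • ζ j + c • τ k) := by
  have hmkQ (k : κ) : N.mkQ (∑ j, a k j • ζ j + c • τ k) = c • N.mkQ (τ k) := by
    rw [map_add, map_smul, add_eq_right, N.mkQ_apply, Submodule.Quotient.mk_eq_zero]
    exact sum_mem fun j _ => N.smul_mem _ (hζ j)
  simp only [hmkQ]
  exact hτ.units_smul fun _ => Units.mk0 c hc

section PowerBound

variable {E : Type*} [NormedAddCommGroup E] [NormedSpace ℝ E] [MeasurableSpace E]
  {F : Type*} [NormedAddCommGroup F] [NormedSpace ℝ F]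

/-- The null hypothesis `𝒫₀^Q`: the Gaussian laws with injective covariance under which `X` and `Y`
are conditionally independent given `Z`, and `Z` is distributed as under `Q`. -/
def gaussianNull {α β : Type*} [MeasurableSpace α] [MeasurableSpace β]
    [MeasurableSpace F] (Q : Measure E) (X : E → α) (Y : E → β) (Z : E → F) : Set (Measure E) :=
  {P | IsProbabilityMeasure P ∧ IsGaussianMeasure P ∧ HasInjectiveCovariance P ∧
    CondIndepGiven P X Y Z ∧ P.map Z = Q.map Z}

variable [BorelSpace E] {Q : Measure E}

theorem exists_orthonormal_centeredDual_sub_sum_mem [IsFiniteMeasure Q] {ι : Type*} [Finite ι]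
    (p : E →L[ℝ] F) (L : ι → StrongDual ℝ E) :
    ∃ (r : ℕ) (G : Fin r → Lp ℝ 2 Q), Orthonormal ℝ G ∧
      (∀ k, G k ∈ gaussianSpace Q (.id ℝ E)) ∧ (∀ k, G k ∈ (gaussianSpace Q p)ᗮ) ∧
      ∀ i, centeredDual Q (L i) - ∑ k, ⟪G k, centeredDual Q (L i)⟫ • G k ∈ gaussianSpace Q p :=
  have : CompleteSpace (gaussianSpace Q p) := isClosed_gaussianSpace.completeSpace_coe
  exists_orthonormal_mem_orthogonal_sub_sum_mem gaussianSpace_le_gaussianSpace_id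
    fun i => centeredDual_mem_gaussianSpace_id (L i)

variable [CompleteSpace E] [SecondCountableTopology E]

section IsGaussian

variable [IsGaussian Q] {p : E →L[ℝ] F}

theorem ae_eq_comp_sum_add_smul {ι : Type*} [Fintype ι] {ζ : ι → StrongDual ℝ F} {t : F → ℝ}
    {τ : Lp ℝ 2 Q} (hτ : τ =ᵐ[Q] t ∘ p) (a : ι → ℝ) (c : ℝ) :
    (∑ j, a j • centeredDual Q (ζ j ∘L p) + c • τ : Lp ℝ 2 Q) =ᵐ[Q]
      (fun z => ∑ j, a j * (ζ j z - ζ j (p (∫ x, x ∂Q))) + c * t z) ∘ p := by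
  filter_upwards [Lp.coeFn_add (∑ j, a j • centeredDual Q (ζ j ∘L p)) (c • τ),
    coeFn_sum_smul_L2 a fun j => centeredDual Q (ζ j ∘L p), Lp.coeFn_smul c τ,
    ae_all_iff.2 fun j => coeFn_centeredDual (ζ j ∘L p), hτ] with x hadd hsum hsmul hζ hτ
  simp only [hadd, Pi.add_apply, hsum, hsmul, Pi.smul_apply, smul_eq_mul, hζ, hτ,
    Function.comp_apply, ContinuousLinearMap.comp_apply]

theorem exists_linearIndependent_mkQ_gaussianSpace (hQ : HasInjectiveCovariance Q)
    (hp : ¬ FiniteDimensional ℝ p.range) {W : Submodule ℝ (Lp ℝ 2 Q)} (hW : W.FG) :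
    ∃ τ : ℕ → Lp ℝ 2 Q, (∀ j, τ j ∈ gaussianSpace Q p) ∧
      LinearIndependent ℝ fun j => ((centeredDual Q).range ⊔ W).mkQ (τ j) :=
  exists_linearIndependent_mkQ_of_forall_fg fun W' hW' => by
    rw [sup_assoc]
    exact not_gaussianSpace_le_range_centeredDual_sup hQ hp (hW.sup hW')

variable [MeasurableSpace F] [BorelSpace F] {κ : Type*} [Fintype κ] {G : κ → Lp ℝ 2 Q}

theorem pi_le_of_forall_innovationReplacedLaw_le {ι : Type*} [Fintype ι]
    {L : ℕ → StrongDual ℝ F} (hL : Orthonormal ℝ fun j => centeredDual Q (L j ∘L p))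
    {t : κ → F → ℝ} (ht : ∀ k, Measurable (t k)) (hG : Orthonormal ℝ G)
    (hGid : ∀ k, G k ∈ gaussianSpace Q (.id ℝ E)) (hGorth : ∀ k, G k ∈ (gaussianSpace Q p)ᗮ)
    {A : Set (ι → E)} (hA : MeasurableSet A) {C : ℝ≥0∞}
    (hC : ∀ (N : ℕ) (a : κ → Fin N → ℝ) (c : ℝ), c ≠ 0 →
      (Measure.pi fun _ : ι => innovationReplacedLaw Q p G fun k z =>
        ∑ j, a k j * (L j z - L j (p (∫ x, x ∂Q))) + c * t k z) A ≤ C) :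
    (Measure.pi fun _ : ι => Q) A ≤ C := by
  set R : E → E := innovationShift Q G fun k => G k
  have hR : Measurable R := measurable_innovationShift fun k =>
    (Lp.stronglyMeasurable (G k)).measurable
  set ζ : ℕ → E → ℝ := fun j x => L j (p x) - L j (p (∫ y, y ∂Q))
  have hp : Measurable p := p.continuous.measurable
  have hζ (j : ℕ) : Measurable (ζ j) := ((L j).continuous.measurable.comp hp).sub_const _
  have hζQ (j : ℕ) : centeredDual Q (L j ∘L p) =ᵐ[Q] ζ j := coeFn_centeredDual (L j ∘L p)
  have hζR (j : ℕ) : ζ j ∘ R = ζ j := by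
    ext1 x
    simp only [ζ, R, Function.comp_apply, map_innovationShift hGorth]
  have hindep : Pairwise fun i j => IndepFun (ζ i) (ζ j) (Q.map R) := fun i j hij => by
    refine indepFun_map hR (hζ i) (hζ j) ?_
    rw [hζR, hζR]
    exact ((iIndepFun_of_orthonormal_gaussianSpace hL fun _ =>
      centeredDual_mem_gaussianSpace_id _).indepFun hij).congr (hζQ i) (hζQ j)
  have hlaw (j : ℕ) : (Q.map R).map (ζ j) = gaussianReal 0 1 := by
    rw [Measure.map_map (hζ j) hR, hζR, ← Measure.map_congr (hζQ j)]
    exact map_eq_gaussianReal_of_norm_eq_one (centeredDual_mem_gaussianSpace_id _) (hL.1 j)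
  have := Measure.isProbabilityMeasure_map (μ := Q) hR.aemeasurable
  rw [← map_prod_stdNormalPi_eq_self hG hGid]
  refine pi_map_prod_translate_le_of_forall hζ hindep hlaw (fun k => (ht k).comp hp) hA
    fun N a c hc => (hC N a c hc).trans_eq' ?_
  rw [innovationReplacedLaw_eq_map hGorth fun k => by fun_prop]
  rfl

theorem innovationReplacedLaw_mem_gaussianNull {α ι : Type*} [MeasurableSpace α] [Finite ι]
    {X : E → α} (hX : Measurable X) {Y : E →L[ℝ] ι → ℝ} {W : κ → Lp ℝ 2 Q} {w : κ → F → ℝ}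
    (hQ : HasInjectiveCovariance Q) (hGid : ∀ k, G k ∈ gaussianSpace Q (.id ℝ E))
    (hGorth : ∀ k, G k ∈ (gaussianSpace Q p)ᗮ)
    (hY : ∀ i, centeredDual Q (.proj i ∘L Y) -
      ∑ k, ⟪G k, centeredDual Q (.proj i ∘L Y)⟫ • G k ∈ gaussianSpace Q p)
    (hW : ∀ k, W k ∈ gaussianSpace Q p) (hw : ∀ k, Measurable (w k))
    (hwW : ∀ k, W k =ᵐ[Q] w k ∘ p)
    (hind : LinearIndependent ℝ fun k => ((centeredDual Q).range ⊔
      Submodule.span ℝ (Set.range G)).mkQ (W k)) :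
    innovationReplacedLaw Q p G w ∈ gaussianNull Q X Y p :=
  have hgauss := isGaussian_innovationReplacedLaw hGid hW hwW
  ⟨hgauss.toIsProbabilityMeasure, isGaussianMeasure_iff_isGaussian.2 hgauss,
    hasInjectiveCovariance_innovationReplacedLaw hQ hGid hW hw hwW hind,
    condIndepGiven_innovationReplacedLaw hX hGorth hW hw hwW hY,
    map_innovationReplacedLaw hGorth hw⟩

end IsGaussian

variable [MeasurableSpace F] [BorelSpace F]

theorem power_le_size_gaussian_hilbertian_general {α ι κ : Type*} [MeasurableSpace α] [Finite ι]
    [Fintype κ] (hQgauss : IsGaussianMeasure Q) (hQinj : HasInjectiveCovariance Q)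
    {X : E → α} (hX : Measurable X) (Y : E →L[ℝ] ι → ℝ) {Z : E →L[ℝ] F}
    (hZ : ¬ FiniteDimensional ℝ Z.range) {A : Set (κ → E)} (hA : MeasurableSet A) :
    (Measure.pi fun _ : κ => Q) A ≤
      ⨆ P ∈ gaussianNull Q X Y Z, (Measure.pi fun _ : κ => P) A := by
  have : IsGaussian Q := isGaussianMeasure_iff_isGaussian.1 hQgauss
  obtain ⟨r, G, hG, hGid, hGorth, hY⟩ := exists_orthonormal_centeredDual_sub_sum_mem (Q := Q) Z
    fun i => .proj i ∘L Y
  obtain ⟨L, hL⟩ := exists_orthonormal_nat_centeredDual_comp hQinj hZ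
  obtain ⟨τ, hτ, hτind⟩ := exists_linearIndependent_mkQ_gaussianSpace hQinj hZ
    (Submodule.fg_span (Set.finite_range G))
  choose t ht hτt using fun j => exists_measurable_comp_of_mem_gaussianSpace (hτ j)
  refine pi_le_of_forall_innovationReplacedLaw_le hL (fun k : Fin r => ht k) hG hGid hGorth hA
    fun N a c hc => le_iSup₂_of_le (innovationReplacedLaw Q Z G _) ?_ le_rfl
  have hζ (j : Fin N) : centeredDual Q (L j ∘L Z) ∈ gaussianSpace Q Z :=
    centeredDual_comp_mem_gaussianSpace (L j)
  have hW (k : Fin r) : ∑ j, a k j • centeredDual Q (L j ∘L Z) + c • τ k ∈ gaussianSpace Q Z :=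
    add_mem (sum_mem fun j _ => Submodule.smul_mem _ _ (hζ j)) (Submodule.smul_mem _ _ (hτ k))
  have hind := linearIndependent_mkQ_sum_add_smul
    (fun j : Fin N => Submodule.mem_sup_left
      (LinearMap.mem_range_self (centeredDual Q).toLinearMap (L j ∘L Z)))
    (hτind.comp _ (Fin.val_injective (n := r))) a hc
  exact innovationReplacedLaw_mem_gaussianNull hX hQinj hGid hGorth hY hW (fun k => by fun_prop)
    (fun k => ae_eq_comp_sum_add_smul (hτt k) (a k) c) hind

end PowerBound

/-- Theorem 1 (hardness of conditional independence testing with Gaussian functional data):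
for any alternative `Q` and any test `ψ` on `n` i.i.d. observations, the power of the test
against `Q` is at most its size over the null `𝒫₀^Q` of jointly Gaussian distributions with
injective covariance operator, satisfying conditional independence, and having the same
marginal distribution of `Z` as `Q`. -/
theorem power_le_size_gaussian_hilbertian
    {HX HZ : Type*}
    [NormedAddCommGroup HX] [InnerProductSpace ℝ HX] [CompleteSpace HX]
    [TopologicalSpace.SeparableSpace HX] [MeasurableSpace HX] [BorelSpace HX]
    [NormedAddCommGroup HZ] [InnerProductSpace ℝ HZ] [CompleteSpace HZ]
    [TopologicalSpace.SeparableSpace HZ] [MeasurableSpace HZ] [BorelSpace HZ]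
    (hinf : ¬ FiniteDimensional ℝ HZ)
    (dY : ℕ)
    (Q : Measure (HX × (Fin dY → ℝ) × HZ))
    (hQprob : IsProbabilityMeasure Q)
    (hQgauss : IsGaussianMeasure Q)
    (hQinj : HasInjectiveCovariance Q)
    (hQalt : ¬ CondIndepGiven Q (fun ω => ω.1) (fun ω => ω.2.1) (fun ω => ω.2.2))
    (n : ℕ)
    (ψ : (Fin n → HX × (Fin dY → ℝ) × HZ) → Bool)
    (hψ : Measurable ψ) :
    (Measure.pi fun _ : Fin n => Q) {x | ψ x = true} ≤
      ⨆ (P : Measure (HX × (Fin dY → ℝ) × HZ)) (_ :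
        IsProbabilityMeasure P ∧ IsGaussianMeasure P ∧ HasInjectiveCovariance P ∧
          CondIndepGiven P (fun ω => ω.1) (fun ω => ω.2.1) (fun ω => ω.2.2) ∧
          P.map (fun ω => ω.2.2) = Q.map (fun ω => ω.2.2)),
        (Measure.pi fun _ : Fin n => P) {x | ψ x = true} := by
  have := UniformSpace.secondCountable_of_separable HX
  have := UniformSpace.secondCountable_of_separable HZ
  let YZ : HX × (Fin dY → ℝ) × HZ →L[ℝ] (Fin dY → ℝ) × HZ := .snd ℝ _ _
  have hZ : ¬ FiniteDimensional ℝ (.snd ℝ _ _ ∘L YZ).range := by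
    have hsurj : Function.Surjective (.snd ℝ _ _ ∘L YZ) :=
      Prod.snd_surjective.comp Prod.snd_surjective
    rw [LinearMap.range_eq_top.2 hsurj]
    exact fun _ => hinf Submodule.topEquiv.finiteDimensional
  exact power_le_size_gaussian_hilbertian_general hQgauss hQinj measurable_fst (.fst ℝ _ _ ∘L YZ)
    hZ (hψ (measurableSet_singleton true))
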